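/- Cancellation of higher order terms, Case 1 (Corollary 4.7, estimate (AG), for classical solutions). Let n ≥ 3, Ω ⊆ ℝⁿ a domain, 2 ≤ k ≤ n, f : Ω×ℝ×ℝⁿ → ℝ positive and C^{1,1}_loc, H₁ : Ω×ℝ → ℝ C^{1,1}_loc with H₁ ≥ 0, and H(x,z,ξ) := H₁(x,z)|ξ|²I. Fix concentric balls with closure(B_{2R}) ⊂ Ω, and constants M > 0 and c₀ > 0. Then there is a constant C, depending only on n, k, R, f, H₁, M and c₀, such that the following holds. Let u ∈ C³(Ω) satisfy σ_k(A_H[u]) = f(x,u,∇u)^k and λ(A_H[u]) ∈ Γ_k^+ on Ω, with sup_{B_{2R}}(|u|+|∇u|) ≤ M; let C₁ ∈ [0,M] satisfy Δu + C₁ ≥ 1 and |∇²u| ≤ Δu + C₁ pointwise on B_{2R}; let q > 1, ρ ∈ (0,R/3], 0 < |h| < ρ, and let η be a smooth function supported in B_{R+2ρ} with 0 ≤ η ≤ 1, η ≡ 1 on B_{R+ρ}, |∇η| ≤ c₀/ρ and |∇²η| ≤ c₀/ρ². Set ṽ := v_h + C₁. Then ∫_{B_{R+2ρ}} η (ṽ⁺)^{q−1}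 Σ_j (Σ_i ∂_i(F[u]^{ij})) ∂_j ṽ + Σ_{l=1}^n ∫_{B_{R+2ρ}} η (ṽ⁺)^{q−1} Σ_{i,j} F[u]^{ij} Δ_{ll}^h((H[u])_{ij}) ≥ −(C/ρ)·( ∫_{B_{R+2ρ}}(ṽ⁺)^{q+k−1} + ∫_{B_{R+3ρ}}(Δu+C₁)^{q+k−1} ). -/

import Mathlib

open MeasureTheory Metric Set Matrix

noncomputable section

/-- The `k`-th elementary symmetric polynomial of the eigenvalues of an `n × n` real
matrix, defined via the coefficients of the characteristic polynomial. -/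
def esymmMat {n : ℕ} (k : ℕ) (A : Matrix (Fin n) (Fin n) ℝ) : ℝ :=
  (-1 : ℝ) ^ k * A.charpoly.coeff (n - k)

/-- `λ(A) ∈ Γ_k^+`, i.e. `σ_j(A) > 0` for all `1 ≤ j ≤ k`. -/
def GammaPlus {n : ℕ} (k : ℕ) (A : Matrix (Fin n) (Fin n) ℝ) : Prop :=
  ∀ j : ℕ, 1 ≤ j → j ≤ k → 0 < esymmMat j A

/-- The Newton tensors `T_0(A) = I`, `T_j(A) = σ_j(A) I - T_{j-1}(A) A`. -/
def newtonT {n : ℕ} : ℕ → Matrix (Fin n) (Fin n) ℝ → Matrix (Fin n) (Fin n) ℝ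
  | 0, _ => 1
  | (j + 1), A => esymmMat (j + 1) A • (1 : Matrix (Fin n) (Fin n) ℝ) - newtonT j A * A

/-- `i`-th partial derivative. -/
def pd {n : ℕ} (i : Fin n) (w : (Fin n → ℝ) → ℝ) (x : Fin n → ℝ) : ℝ :=
  fderiv ℝ w x (Pi.single i 1)

/-- Gradient as a vector. -/
def grad {n : ℕ} (w : (Fin n → ℝ) → ℝ) (x : Fin n → ℝ) : Fin n → ℝ :=
  fun i => pd i w x

/-- Hessian matrix. -/
def hess {n : ℕ} (w : (Fin n → ℝ) → ℝ) (x : Fin n → ℝ) : Matrix (Fin n) (Fin n) ℝ :=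
  Matrix.of fun i j => pd i (pd j w) x

/-- Squared Euclidean norm of a vector. -/
def normSq {n : ℕ} (ξ : Fin n → ℝ) : ℝ := ∑ i, ξ i ^ 2

/-- Euclidean norm of a vector. -/
def vnorm {n : ℕ} (ξ : Fin n → ℝ) : ℝ := Real.sqrt (∑ i, ξ i ^ 2)

/-- Operator norm of a matrix, viewed as a linear map between Euclidean spaces. -/
def matNorm {n : ℕ} (M : Matrix (Fin n) (Fin n) ℝ) : ℝ :=
  ‖LinearMap.toContinuousLinearMap (Matrix.toEuclideanLin M)‖

/-- Laplacian. -/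
def lapl {n : ℕ} (w : (Fin n → ℝ) → ℝ) (x : Fin n → ℝ) : ℝ := ∑ l, pd l (pd l w) x

/-- `W^{2,p}` norm (with classical derivatives) on a set. -/
def W2pNorm {n : ℕ} (p : ℝ) (w : (Fin n → ℝ) → ℝ) (B : Set (Fin n → ℝ)) : ℝ :=
  (∫ x in B, (|w x| ^ p + vnorm (grad w x) ^ p + matNorm (hess w x) ^ p)) ^ (1 / p)

/-- `C^{1,1}_loc` on a set: continuously differentiable with locally Lipschitz
first derivatives. -/
def C11On {E F : Type*} [NormedAddCommGroup E] [NormedSpace ℝ E]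
    [NormedAddCommGroup F] [NormedSpace ℝ F] (f : E → F) (s : Set E) : Prop :=
  ContDiffOn ℝ 1 f s ∧
    ∀ x ∈ s, ∃ (K : NNReal) (t : Set E), t ∈ nhdsWithin x s ∧
      LipschitzOnWith K (fderivWithin ℝ f s) t

/-- First order difference quotient `∇_l^h`. -/
def dq {n : ℕ} (l : Fin n) (h : ℝ) (w : (Fin n → ℝ) → ℝ) (x : Fin n → ℝ) : ℝ :=
  (w (x + h • (Pi.single l 1 : Fin n → ℝ)) - w x) / h

/-- Second order difference quotient `Δ_{ll}^h`. -/
def ddq {n : ℕ} (l : Fin n) (h : ℝ) (w : (Fin n → ℝ) → ℝ) (x : Fin n → ℝ) : ℝ :=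
  (w (x + h • (Pi.single l 1 : Fin n → ℝ)) - 2 * w x + w (x - h • (Pi.single l 1 : Fin n → ℝ))) / h ^ 2

/-- `L^s` seminorm (as an extended real number) of a function on a set. -/
def lpN {n : ℕ} (s : ℝ) (w : (Fin n → ℝ) → ℝ) (S : Set (Fin n → ℝ)) : ENNReal :=
  (∫⁻ x in S, ENNReal.ofReal (|w x| ^ s)) ^ (1 / s)

end


section Algebra
variable {n : ℕ}

lemma adj_coeff_rec (A : Matrix (Fin n) (Fin n) ℝ) (d : ℕ) (i j : Fin n) :
    ((adjugate (charmatrix A)) i j).coeff d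
      = ∑ l, ((adjugate (charmatrix A)) i l).coeff (d + 1) * A l j
        + (if i = j then A.charpoly.coeff (d + 1) else 0) := by
  have h := congrFun (congrFun (adjugate_mul (charmatrix A)) i) j
  have h2 := congrArg (fun p => Polynomial.coeff p (d + 1)) h
  simp only [Matrix.mul_apply, charmatrix_apply, mul_sub, Finset.sum_sub_distrib,
    Polynomial.coeff_sub, Polynomial.finsetSum_coeff, Polynomial.coeff_mul_C,
    Matrix.smul_apply, Matrix.one_apply, smul_eq_mul, Matrix.diagonal_apply] at h2
  simp only [mul_ite, mul_zero, mul_one, Finset.sum_ite_eq', Finset.mem_univ, if_true,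
    apply_ite (fun p : Polynomial ℝ => p.coeff (d+1)), Polynomial.coeff_mul_X,
    Polynomial.coeff_zero] at h2
  rw [← charpoly] at h2
  linarith

lemma adj_coeff_top (A : Matrix (Fin n) (Fin n) ℝ) (d : ℕ) (hd : n ≤ d) (i j : Fin n) :
    ((adjugate (charmatrix A)) i j).coeff d = 0 := by
  have key : ∀ N : ℕ, ∀ d, n ≤ d → (∀ i j : Fin n, ((adjugate (charmatrix A)) i j).coeff (d+N) = 0)
      → ∀ i j : Fin n, ((adjugate (charmatrix A)) i j).coeff d = 0 := by
    intro N
    induction N with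
    | zero => intro d _ h; simpa using h
    | succ N ih =>
      intro d hd h i j
      have h1 := ih (d+1) (by omega) (by intro i j; rw [← h i j]; congr 1; omega)
      rw [adj_coeff_rec]
      have : A.charpoly.coeff (d+1) = 0 := by
        apply Polynomial.coeff_eq_zero_of_natDegree_lt
        rw [charpoly_natDegree_eq_dim]; simp; omega
      simp [h1, this]
  refine key (∑ i, ∑ j, (((adjugate (charmatrix A)) i j).natDegree + 1)) d hd ?_ i j
  intro i j
  apply Polynomial.coeff_eq_zero_of_natDegree_lt
  have h1 : ((adjugate (charmatrix A)) i j).natDegree + 1 ≤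
      ∑ j, (((adjugate (charmatrix A)) i j).natDegree + 1) :=
    Finset.single_le_sum (f := fun j => ((adjugate (charmatrix A)) i j).natDegree + 1)
      (fun _ _ => Nat.zero_le _) (Finset.mem_univ j)
  have h2 : ∑ j, (((adjugate (charmatrix A)) i j).natDegree + 1) ≤
      ∑ i, ∑ j, (((adjugate (charmatrix A)) i j).natDegree + 1) :=
    Finset.single_le_sum (f := fun i => ∑ j, (((adjugate (charmatrix A)) i j).natDegree + 1))
      (fun _ _ => Nat.zero_le _) (Finset.mem_univ i)
  omega

lemma esymm_zero (A : Matrix (Fin n) (Fin n) ℝ) : esymmMat 0 A = 1 := by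
  have := charpoly_monic A
  rw [Polynomial.Monic, Polynomial.leadingCoeff, charpoly_natDegree_eq_dim] at this
  simpa [esymmMat] using this

lemma adj_coeff_newton (A : Matrix (Fin n) (Fin n) ℝ) (m : ℕ) (hm : m + 1 ≤ n) (i j : Fin n) :
    ((adjugate (charmatrix A)) i j).coeff (n - (m + 1)) = (-1) ^ m * newtonT m A i j := by
  induction m generalizing i j with
  | zero =>
    rw [adj_coeff_rec, show n - (0+1) + 1 = n by omega]
    have := esymm_zero A
    simp [esymmMat] at this
    simp [adj_coeff_top A n le_rfl, this, newtonT, Matrix.one_apply]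
  | succ m ih =>
    rw [adj_coeff_rec, show n - (m+1+1) + 1 = n - (m+1) by omega]
    simp only [ih (by omega), newtonT, Matrix.sub_apply, Matrix.smul_apply, Matrix.mul_apply,
      Matrix.one_apply, smul_eq_mul, mul_ite, mul_one, mul_zero]
    have e : ((-1:ℝ))^(m+1) * (-1)^(m+1) = 1 := by rw [← mul_pow]; simp
    rw [mul_sub, Finset.mul_sum]
    split_ifs
    · rw [esymmMat, ← mul_assoc, e, sub_eq_neg_add, ← Finset.sum_neg_distrib]
      simp [pow_succ, mul_assoc]
    · rw [mul_zero, zero_sub, ← Finset.sum_neg_distrib]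
      simp [pow_succ, mul_assoc]

lemma charpoly_perturb (A : Matrix (Fin n) (Fin n) ℝ) (i j : Fin n) (t : ℝ) :
    (A + t • Matrix.single i j (1:ℝ)).charpoly =
      A.charpoly - Polynomial.C t * (adjugate (charmatrix A)) j i := by
  have h : charmatrix (A + t • Matrix.single i j (1:ℝ)) =
      (charmatrix A).updateRow i ((charmatrix A) i + (-Polynomial.C t) • Pi.single j 1) := by
    ext1 a b
    by_cases ha : a = i
    · subst ha
      by_cases hb : b = j
      · subst hb
        simp [charmatrix_apply]; ring
      · simp [charmatrix_apply, Matrix.single_apply, hb, Ne.symm hb]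
    · simp [charmatrix_apply, Matrix.updateRow_apply, ha, Matrix.single_apply, Ne.symm ha]
  rw [charpoly, h, det_updateRow_add, det_updateRow_smul, updateRow_eq_self, adjugate_apply,
    charpoly]
  ring

lemma esymm_perturb (A : Matrix (Fin n) (Fin n) ℝ) (m : ℕ) (hm : m + 1 ≤ n) (i j : Fin n) (t : ℝ) :
    esymmMat (m+1) (A + t • Matrix.single i j (1:ℝ)) = esymmMat (m+1) A + t * newtonT m A j i := by
  rw [esymmMat, charpoly_perturb, esymmMat, Polynomial.coeff_sub, Polynomial.coeff_C_mul,
    adj_coeff_newton A m hm]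
  have e : ((-1:ℝ))^(m) * (-1)^(m) = 1 := by rw [← mul_pow]; simp
  rw [pow_succ]; linear_combination t * newtonT m A j i * e

/-- the universal polynomial of `esymmMat`. -/
noncomputable def esP (n m : ℕ) : MvPolynomial (Fin n × Fin n) ℝ :=
  MvPolynomial.C ((-1)^m) * (Matrix.charpoly.univ ℝ (Fin n)).coeff (n - m)

lemma esymm_eq_eval (m : ℕ) (A : Matrix (Fin n) (Fin n) ℝ) :
    esymmMat m A = MvPolynomial.eval (fun p : Fin n × Fin n => A p.1 p.2) (esP n m) := by
  have := Matrix.charpoly.univ_coeff_eval₂Hom (n := Fin n) (RingHom.id ℝ)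
    (fun p : Fin n × Fin n => A p.1 p.2) (n - m)
  rw [esP, map_mul, MvPolynomial.eval_C, esymmMat]
  congr 1
  exact this.symm

lemma esP_hom (m : ℕ) (hm : m ≤ n) : (esP n m).IsHomogeneous m := by
  have := (MvPolynomial.isHomogeneous_C (Fin n × Fin n) ((-1 : ℝ)^m)).mul
    (Matrix.charpoly.univ_coeff_isHomogeneous ℝ (Fin n) (n-m) m (by simp; omega))
  simpa [esP] using this

lemma mvp_contDiff {σ : Type*} [Fintype σ] (p : MvPolynomial σ ℝ) {N : WithTop ℕ∞} :
    ContDiff ℝ N (fun a : σ → ℝ => MvPolynomial.eval a p) := by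
  induction p using MvPolynomial.induction_on with
  | C a => simpa using contDiff_const
  | add p q hp hq => simpa using hp.add hq
  | mul_X p i hp => simpa using hp.mul (contDiff_apply ℝ ℝ i)

lemma mvp_bound {σ : Type*} [Fintype σ] (p : MvPolynomial σ ℝ) (m : ℕ) (hp : p.IsHomogeneous m) :
    ∃ C : ℝ, 0 ≤ C ∧ ∀ (a : σ → ℝ) (w : ℝ), 0 ≤ w → (∀ i, |a i| ≤ w) →
      |MvPolynomial.eval a p| ≤ C * w ^ m := by
  refine ⟨∑ d ∈ p.support, |p.coeff d|, Finset.sum_nonneg (fun _ _ => abs_nonneg _), ?_⟩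
  intro a w hw ha
  rw [MvPolynomial.eval_eq', Finset.sum_mul]
  refine (Finset.abs_sum_le_sum_abs _ _).trans (Finset.sum_le_sum fun d hd => ?_)
  rw [abs_mul, Finset.abs_prod]
  refine mul_le_mul_of_nonneg_left ?_ (abs_nonneg _)
  have hdeg : ∑ i, d i = m := by
    have := hp (MvPolynomial.mem_support_iff.mp hd)
    rw [← this, Finsupp.weight_apply, Finsupp.sum_fintype] <;> simp
  rw [← hdeg, ← Finset.prod_pow_eq_pow_sum]
  refine Finset.prod_le_prod (fun _ _ => abs_nonneg _) (fun i _ => ?_)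
  rw [abs_pow]
  exact pow_le_pow_left₀ (abs_nonneg _) (ha i) _

variable {E : Type*} [NormedAddCommGroup E] [NormedSpace ℝ E]

lemma esymm_contDiffOn {N : WithTop ℕ∞} {S : Set E} (m : ℕ) (A : E → Matrix (Fin n) (Fin n) ℝ)
    (hA : ∀ i j, ContDiffOn ℝ N (fun y => A y i j) S) :
    ContDiffOn ℝ N (fun y => esymmMat m (A y)) S := by
  simp only [esymm_eq_eval]
  exact (mvp_contDiff (esP n m)).comp_contDiffOn (contDiffOn_pi.2 fun p => hA p.1 p.2)

lemma newton_contDiffOn {N : WithTop ℕ∞} {S : Set E} (m : ℕ) (A : E → Matrix (Fin n) (Fin n) ℝ)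
    (hA : ∀ i j, ContDiffOn ℝ N (fun y => A y i j) S) (i j : Fin n) :
    ContDiffOn ℝ N (fun y => newtonT m (A y) i j) S := by
  induction m generalizing i j with
  | zero => exact contDiffOn_const
  | succ m ih =>
    simp only [newtonT, Matrix.sub_apply, Matrix.smul_apply, Matrix.mul_apply, smul_eq_mul]
    exact ((esymm_contDiffOn _ A hA).mul contDiffOn_const).sub
      (ContDiffOn.sum fun l _ => (ih i l).mul (hA l j))

lemma esymm_hasFDerivAt (m : ℕ) (hm : m + 1 ≤ n) (A : E → Matrix (Fin n) (Fin n) ℝ) (x : E)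
    (A' : Fin n → Fin n → E →L[ℝ] ℝ)
    (hA : ∀ i j, HasFDerivAt (fun y => A y i j) (A' i j) x) :
    HasFDerivAt (fun y => esymmMat (m+1) (A y)) (∑ i, ∑ j, newtonT m (A x) j i • A' i j) x := by
  set g : (Fin n × Fin n → ℝ) → ℝ := fun a => MvPolynomial.eval a (esP n (m+1)) with hg
  have hgd : Differentiable ℝ g := (mvp_contDiff (esP n (m+1)) (N := 1)).differentiable (by simp)
  set a : Fin n × Fin n → ℝ := fun p => A x p.1 p.2 with ha
  have hp : ∀ i j, fderiv ℝ g a (Pi.single (i, j) 1) = newtonT m (A x) j i := by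
    intro i j
    have h1 : HasDerivAt (fun t : ℝ => g (a + t • Pi.single (i,j) 1))
        (fderiv ℝ g a (Pi.single (i, j) 1)) 0 := by
      have := (hgd a).hasFDerivAt.hasLineDerivAt (Pi.single (i, j) 1)
      exact this
    have h2 : (fun t : ℝ => g (a + t • Pi.single (i,j) 1)) =
        fun t => esymmMat (m+1) (A x) + t * newtonT m (A x) j i := by
      funext t
      rw [← esymm_perturb (A x) m hm i j t, esymm_eq_eval]
      simp only [hg]
      congr 2
      funext p
      obtain ⟨p1, p2⟩ := p
      simp [ha, Matrix.single_apply, Pi.single_apply, Prod.ext_iff, eq_comm]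
    rw [h2] at h1
    have h3 : HasDerivAt (fun t : ℝ => esymmMat (m+1) (A x) + t * newtonT m (A x) j i)
        (newtonT m (A x) j i) 0 := by
      simpa using ((hasDerivAt_id (0:ℝ)).mul_const (newtonT m (A x) j i)).const_add
        (esymmMat (m+1) (A x))
    exact h1.unique h3
  have hc : HasFDerivAt (fun y => (fun p : Fin n × Fin n => A y p.1 p.2))
      (ContinuousLinearMap.pi fun p : Fin n × Fin n => A' p.1 p.2) x :=
    hasFDerivAt_pi.2 fun p => hA p.1 p.2
  have := (hgd a).hasFDerivAt.comp x hc
  simp only [esymm_eq_eval]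
  refine this.congr_fderiv ?_
  ext v
  simp only [ContinuousLinearMap.comp_apply, _root_.sum_apply,
    _root_.smul_apply, smul_eq_mul]
  set b : Fin n × Fin n → ℝ := (ContinuousLinearMap.pi fun p : Fin n × Fin n => A' p.1 p.2) v
  have hb : b = ∑ p : Fin n × Fin n, b p • (Pi.single p 1 : Fin n × Fin n → ℝ) := by
    funext q; simp [Finset.sum_apply, Pi.single_apply]
  rw [hb, map_sum, Fintype.sum_prod_type]
  refine Finset.sum_congr rfl fun i _ => Finset.sum_congr rfl fun j _ => ?_
  rw [map_smul, hp, smul_eq_mul, mul_comm]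
  rfl

lemma newton_symm (A : Matrix (Fin n) (Fin n) ℝ) (hA : Aᵀ = A) (m : ℕ) :
    (newtonT m A)ᵀ = newtonT m A ∧ A * newtonT m A = newtonT m A * A := by
  induction m with
  | zero => simp [newtonT]
  | succ m ih =>
    constructor
    · simp only [newtonT, Matrix.transpose_sub, Matrix.transpose_smul, Matrix.transpose_one,
        Matrix.transpose_mul, hA, ih.1, ih.2]
    · simp only [newtonT, mul_sub, sub_mul, ← mul_assoc, ih.2]; simp

lemma trace_newton_mul (A : Matrix (Fin n) (Fin n) ℝ) (m : ℕ) (hm : m + 1 ≤ n) :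
    ∑ i, ∑ j, newtonT m A i j * A j i = (m+1) * esymmMat (m+1) A := by
  have h := esymm_hasFDerivAt m hm (fun t : ℝ => t • A) (1:ℝ)
    (fun i j => ContinuousLinearMap.toSpanSingleton ℝ (A i j))
    (fun i j => by
      have : HasDerivAt (fun t : ℝ => t * A i j) (A i j) 1 := by
        simpa using (hasDerivAt_id (1:ℝ)).mul_const (A i j)
      simpa using this.hasFDerivAt)
  have h2 := h.hasDerivAt
  have e : (fun t : ℝ => esymmMat (m+1) (t • A)) = fun t => t^(m+1) * esymmMat (m+1) A := by
    funext t
    rw [esymm_eq_eval, esymm_eq_eval]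
    have := (esP_hom (n := n) (m+1) hm)
    rw [MvPolynomial.eval_eq', MvPolynomial.eval_eq', Finset.mul_sum]
    refine Finset.sum_congr rfl fun d hd => ?_
    have hdeg : ∑ i, d i = m + 1 := by
      have := this (MvPolynomial.mem_support_iff.mp hd)
      rw [← this, Finsupp.weight_apply, Finsupp.sum_fintype] <;> simp
    simp only [Matrix.smul_apply, smul_eq_mul, mul_pow, Finset.prod_mul_distrib]
    rw [Finset.prod_pow_eq_pow_sum, hdeg]; ring
  rw [e] at h2
  have h3 : HasDerivAt (fun t : ℝ => t^(m+1) * esymmMat (m+1) A) ((m+1) * esymmMat (m+1) A) 1 := by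
    simpa using (hasDerivAt_pow (m+1) (1:ℝ)).mul_const (esymmMat (m+1) A)
  have h4 := h2.unique h3
  rw [← h4, Finset.sum_comm]
  simp

lemma trace_newton (A : Matrix (Fin n) (Fin n) ℝ) (m : ℕ) (hm : m ≤ n) :
    ∑ i, newtonT m A i i = (n - m) * esymmMat m A := by
  cases m with
  | zero => simp [newtonT, esymm_zero]
  | succ m =>
    have := trace_newton_mul A m hm
    simp only [newtonT, Matrix.sub_apply, Matrix.smul_apply, Matrix.mul_apply, smul_eq_mul,
      Finset.sum_sub_distrib, this]
    simp; ring

end Algebra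


section Calc
variable {n : ℕ}

lemma pd_mul {i : Fin n} {f g : (Fin n → ℝ) → ℝ} {x : Fin n → ℝ}
    (hf : DifferentiableAt ℝ f x) (hg : DifferentiableAt ℝ g x) :
    pd i (fun y => f y * g y) x = pd i f x * g x + f x * pd i g x := by
  unfold pd
  rw [fderiv_fun_mul hf hg]; simp; ring

lemma pd_add {i : Fin n} {f g : (Fin n → ℝ) → ℝ} {x : Fin n → ℝ}
    (hf : DifferentiableAt ℝ f x) (hg : DifferentiableAt ℝ g x) :
    pd i (fun y => f y + g y) x = pd i f x + pd i g x := by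
  unfold pd
  rw [fderiv_fun_add hf hg]; simp

lemma pd_sub {i : Fin n} {f g : (Fin n → ℝ) → ℝ} {x : Fin n → ℝ}
    (hf : DifferentiableAt ℝ f x) (hg : DifferentiableAt ℝ g x) :
    pd i (fun y => f y - g y) x = pd i f x - pd i g x := by
  unfold pd
  rw [fderiv_fun_sub hf hg]; simp

lemma pd_const {i : Fin n} {c : ℝ} {x : Fin n → ℝ} : pd i (fun _ => c) x = 0 := by
  unfold pd; simp

lemma pd_const_mul {i : Fin n} {c : ℝ} {f : (Fin n → ℝ) → ℝ} {x : Fin n → ℝ}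
    (hf : DifferentiableAt ℝ f x) :
    pd i (fun y => c * f y) x = c * pd i f x := by
  rw [pd_mul (differentiableAt_const c) hf, pd_const]; ring

lemma pd_sum {ι : Type*} {s : Finset ι} {i : Fin n} {f : ι → (Fin n → ℝ) → ℝ} {x : Fin n → ℝ}
    (hf : ∀ l ∈ s, DifferentiableAt ℝ (f l) x) :
    pd i (fun y => ∑ l ∈ s, f l y) x = ∑ l ∈ s, pd i (f l) x := by
  unfold pd
  rw [fderiv_fun_sum hf]; simp

lemma pd_congr {i : Fin n} {f g : (Fin n → ℝ) → ℝ} {x : Fin n → ℝ}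
    {S : Set (Fin n → ℝ)} (hS : IsOpen S) (hx : x ∈ S) (h : ∀ y ∈ S, f y = g y) :
    pd i f x = pd i g x := by
  unfold pd
  have : f =ᶠ[nhds x] g := Filter.eventuallyEq_of_mem (hS.mem_nhds hx) h
  rw [this.fderiv_eq]

lemma pd_contDiffOn {Ω : Set (Fin n → ℝ)} (hΩ : IsOpen Ω) {w : (Fin n → ℝ) → ℝ}
    {a b : WithTop ℕ∞} (hw : ContDiffOn ℝ b w Ω) (hab : a + 1 ≤ b) (i : Fin n) :
    ContDiffOn ℝ a (pd i w) Ω :=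
  (hw.fderiv_of_isOpen hΩ hab).clm_apply contDiffOn_const

lemma dAt {Ω : Set (Fin n → ℝ)} (hΩ : IsOpen Ω) {w : (Fin n → ℝ) → ℝ}
    {b : WithTop ℕ∞} (hw : ContDiffOn ℝ b w Ω) (hb : 1 ≤ b) {x} (hx : x ∈ Ω) :
    DifferentiableAt ℝ w x :=
  (hw.contDiffAt (hΩ.mem_nhds hx)).differentiableAt (by
    intro h; rw [h] at hb; simp at hb)

lemma pd_comm {Ω : Set (Fin n → ℝ)} (hΩ : IsOpen Ω) {w : (Fin n → ℝ) → ℝ}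
    (hw : ContDiffOn ℝ 2 w Ω) {x} (hx : x ∈ Ω) (i j : Fin n) :
    pd i (pd j w) x = pd j (pd i w) x := by
  have hd : DifferentiableAt ℝ (fderiv ℝ w) x :=
    ((hw.fderiv_of_isOpen hΩ (m := 1) (by norm_num)).contDiffAt (hΩ.mem_nhds hx)).differentiableAt
      (by simp)
  have key : ∀ a b : Fin n, pd a (pd b w) x
      = fderiv ℝ (fderiv ℝ w) x (Pi.single a 1) (Pi.single b 1) := by
    intro a b
    have := hd.hasFDerivAt.clm_apply (hasFDerivAt_const (Pi.single b (1:ℝ)) x)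
    unfold pd
    rw [this.fderiv]; simp
  rw [key, key]
  exact (hw.contDiffAt (hΩ.mem_nhds hx)).isSymmSndFDerivAt (by simp) _ _

lemma pd3_comm {Ω : Set (Fin n → ℝ)} (hΩ : IsOpen Ω) {u : (Fin n → ℝ) → ℝ}
    (hu : ContDiffOn ℝ 3 u Ω) {x} (hx : x ∈ Ω) (i j l : Fin n) :
    pd j (pd l (pd i u)) x = pd i (pd l (pd j u)) x := by
  have hu2 : ContDiffOn ℝ 2 u Ω := hu.of_le (by norm_num)
  rw [pd_congr hΩ hx (g := pd i (pd l u)) (fun y hy => pd_comm hΩ hu2 hy l i),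
    pd_comm hΩ (pd_contDiffOn hΩ hu (by norm_num) l) hx j i]
  exact pd_congr hΩ hx (fun y hy => pd_comm hΩ hu2 hy j l)

/-- augmented Hessian with a scalar `φ`. -/
noncomputable def Aug (u φ : (Fin n → ℝ) → ℝ) (y : Fin n → ℝ) : Matrix (Fin n) (Fin n) ℝ :=
  hess u y - φ y • (1 : Matrix (Fin n) (Fin n) ℝ)

lemma Aug_apply (u φ : (Fin n → ℝ) → ℝ) (y : Fin n → ℝ) (i j : Fin n) :
    Aug u φ y i j = pd i (pd j u) y - φ y * (if i = j then 1 else 0) := by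
  simp [Aug, hess, Matrix.one_apply]

section
variable {Ω : Set (Fin n → ℝ)} (hΩ : IsOpen Ω) {u φ : (Fin n → ℝ) → ℝ}
    (hu : ContDiffOn ℝ 3 u Ω) (hφ : ContDiffOn ℝ 1 φ Ω)
include hΩ hu hφ

lemma Aug_contDiffOn (i j : Fin n) : ContDiffOn ℝ 1 (fun y => Aug u φ y i j) Ω := by
  simp only [Aug_apply]
  exact (pd_contDiffOn hΩ (pd_contDiffOn hΩ hu (a := 2) (by norm_num) j) (by norm_num) i).sub
    (hφ.mul contDiffOn_const)

lemma pd_Aug {x} (hx : x ∈ Ω) (l i j : Fin n) :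
    pd l (fun y => Aug u φ y i j) x
      = pd l (pd i (pd j u)) x - pd l φ x * (if i = j then 1 else 0) := by
  have h2 := pd_contDiffOn hΩ (pd_contDiffOn hΩ hu (a := 2) (by norm_num) j) (a := 1)
    (by norm_num) i
  simp only [Aug_apply]
  rw [pd_sub (dAt hΩ h2 le_rfl hx) ((dAt hΩ hφ le_rfl hx).mul_const _),
    pd_mul (dAt hΩ hφ le_rfl hx) (differentiableAt_const _), pd_const]
  ring

lemma newtonAug_contDiffOn (m : ℕ) (i j : Fin n) :
    ContDiffOn ℝ 1 (fun y => newtonT m (Aug u φ y) i j) Ω :=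
  newton_contDiffOn m _ (Aug_contDiffOn hΩ hu hφ) i j

lemma pd_esymm {x} (hx : x ∈ Ω) (m : ℕ) (hm : m + 1 ≤ n) (j : Fin n) :
    pd j (fun y => esymmMat (m+1) (Aug u φ y)) x
      = ∑ i, ∑ l, newtonT m (Aug u φ x) i l * pd j (fun y => Aug u φ y l i) x := by
  have := esymm_hasFDerivAt m hm (Aug u φ) x (fun a b => fderiv ℝ (fun y => Aug u φ y a b) x)
    (fun a b => (dAt hΩ (Aug_contDiffOn hΩ hu hφ a b) le_rfl hx).hasFDerivAt)
  unfold pd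
  rw [this.fderiv, Finset.sum_comm]
  simp

lemma div_step {x} (hx : x ∈ Ω) (m : ℕ) (hm : m + 1 ≤ n) (j : Fin n) :
    ∑ i, pd i (fun y => newtonT (m+1) (Aug u φ y) i j) x
      = - ((n:ℝ) - m) * esymmMat m (Aug u φ x) * pd j φ x
        + ∑ i, newtonT m (Aug u φ x) i j * pd i φ x
        - ∑ l, (∑ i, pd i (fun y => newtonT m (Aug u φ y) i l) x) * Aug u φ x l j := by
  have dT : ∀ i l, DifferentiableAt ℝ (fun y => newtonT m (Aug u φ y) i l) x := fun i l =>
    dAt hΩ (newtonAug_contDiffOn hΩ hu hφ m i l) le_rfl hx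
  have dA : ∀ i l, DifferentiableAt ℝ (fun y => Aug u φ y i l) x := fun i l =>
    dAt hΩ (Aug_contDiffOn hΩ hu hφ i l) le_rfl hx
  have dS : DifferentiableAt ℝ (fun y => esymmMat (m+1) (Aug u φ y)) x :=
    dAt hΩ (esymm_contDiffOn _ _ (Aug_contDiffOn hΩ hu hφ)) le_rfl hx
  have h1 : ∀ i, pd i (fun y => newtonT (m+1) (Aug u φ y) i j) x
      = (if i = j then pd i (fun y => esymmMat (m+1) (Aug u φ y)) x else 0)
        - ∑ l, (pd i (fun y => newtonT m (Aug u φ y) i l) x * Aug u φ x l j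
          + newtonT m (Aug u φ x) i l * pd i (fun y => Aug u φ y l j) x) := by
    intro i
    simp only [newtonT, Matrix.sub_apply, Matrix.smul_apply, Matrix.mul_apply, smul_eq_mul]
    rw [pd_sub (dS.mul_const _) (DifferentiableAt.fun_sum fun l _ => (dT i l).fun_mul (dA l j)),
      pd_mul dS (differentiableAt_const _), pd_const,
      pd_sum (fun l _ => (dT i l).fun_mul (dA l j))]
    simp only [pd_mul (dT i _) (dA _ j), Matrix.one_apply]
    congr 1
    split_ifs <;> simp
  simp only [h1, Finset.sum_sub_distrib, Finset.sum_add_distrib, Finset.sum_ite_eq',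
    Finset.mem_univ, if_true]
  rw [pd_esymm hΩ hu hφ hx m hm j]
  simp only [pd_Aug hΩ hu hφ hx, pd3_comm hΩ hu hx _ j]
  have htr := trace_newton (Aug u φ x) m (by omega)
  simp only [mul_sub, Finset.sum_sub_distrib, Finset.sum_mul]
  rw [Finset.sum_comm (f := fun l i => pd i (fun y => newtonT m (Aug u φ y) i l) x * Aug u φ x l j)]
  have e1 : ∑ i, ∑ l, newtonT m (Aug u φ x) i l * (pd j φ x * (if l = i then 1 else 0))
      = ((n:ℝ) - m) * esymmMat m (Aug u φ x) * pd j φ x := by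
    rw [← htr, Finset.sum_mul]; simp
  have e2 : ∑ i, ∑ l, newtonT m (Aug u φ x) i l * (pd i φ x * (if l = j then 1 else 0))
      = ∑ i, newtonT m (Aug u φ x) i j * pd i φ x := by simp
  rw [e1, e2]; ring

lemma div_newton {x} (hx : x ∈ Ω) (m : ℕ) (hm : m + 1 ≤ n) (j : Fin n) :
    ∑ i, pd i (fun y => newtonT (m+1) (Aug u φ y) i j) x
      = - ((n:ℝ) - (m+1)) * ∑ i, newtonT m (Aug u φ x) i j * pd i φ x := by
  induction m generalizing j with
  | zero =>
    rw [div_step hΩ hu hφ hx 0 hm j]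
    simp [newtonT, pd_const, esymm_zero, Matrix.one_apply]
    ring
  | succ m ih =>
    rw [div_step hΩ hu hφ hx (m+1) hm j]
    simp only [ih (by omega)]
    have e : ∑ l, (-((n:ℝ) - (m+1)) * ∑ i, newtonT m (Aug u φ x) i l * pd i φ x) * Aug u φ x l j
        = -((n:ℝ) - (m+1)) * ∑ i, (newtonT m (Aug u φ x) * Aug u φ x) i j * pd i φ x := by
      simp only [Finset.mul_sum, Finset.sum_mul, Matrix.mul_apply]
      rw [Finset.sum_comm]
      refine Finset.sum_congr rfl fun i _ => Finset.sum_congr rfl fun l _ => by ring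
    have e2 : newtonT m (Aug u φ x) * Aug u φ x = esymmMat (m+1) (Aug u φ x) • (1 : Matrix (Fin n) (Fin n) ℝ)
        - newtonT (m+1) (Aug u φ x) := by simp [newtonT]
    rw [e, e2]
    simp only [Matrix.sub_apply, sub_mul, Finset.sum_sub_distrib, Matrix.smul_apply, smul_eq_mul,
      Matrix.one_apply, mul_ite, mul_one, mul_zero, ite_mul, zero_mul, Finset.sum_ite_eq',
      Finset.mem_univ, if_true]
    push_cast
    ring
end

/-- chain rule for `H₁(y, u y)`. -/
lemma pd_comp {H₁ : ((Fin n → ℝ) × ℝ) → ℝ}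
    {u : (Fin n → ℝ) → ℝ} {x : Fin n → ℝ}
    (hH : DifferentiableAt ℝ H₁ (x, u x)) (hu : DifferentiableAt ℝ u x) (i : Fin n) :
    pd i (fun y => H₁ (y, u y)) x = fderiv ℝ H₁ (x, u x) (Pi.single i 1, 0)
      + fderiv ℝ H₁ (x, u x) (0, 1) * pd i u x := by
  have h := HasFDerivAt.comp x (f := fun y => (y, u y)) hH.hasFDerivAt
    ((hasFDerivAt_id x).prodMk hu.hasFDerivAt)
  have h' : fderiv ℝ (fun y => H₁ (y, u y)) x = _ := h.fderiv
  unfold pd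
  rw [h']
  simp only [ContinuousLinearMap.comp_apply, ContinuousLinearMap.prod_apply,
    ContinuousLinearMap.id_apply]
  have e : ((Pi.single i (1:ℝ), fderiv ℝ u x (Pi.single i 1)) : (Fin n → ℝ) × ℝ)
      = (Pi.single i 1, 0) + (fderiv ℝ u x (Pi.single i 1)) • ((0, 1) : (Fin n → ℝ) × ℝ) := by
    ext <;> simp
  rw [e, map_add, map_smul, smul_eq_mul, mul_comm]

lemma pd_normSq {Ω : Set (Fin n → ℝ)} (hΩ : IsOpen Ω) {u : (Fin n → ℝ) → ℝ}
    (hu : ContDiffOn ℝ 3 u Ω) {x} (hx : x ∈ Ω) (i : Fin n) :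
    pd i (fun y => normSq (grad u y)) x = ∑ l, 2 * pd l u x * pd i (pd l u) x := by
  have hd : ∀ l, DifferentiableAt ℝ (pd l u) x := fun l =>
    dAt hΩ (pd_contDiffOn hΩ hu (a := 2) (by norm_num) l) (by norm_num) hx
  simp only [normSq, grad, pow_two]
  rw [pd_sum (fun l _ => (hd l).fun_mul (hd l))]
  refine Finset.sum_congr rfl fun l _ => ?_
  rw [pd_mul (hd l) (hd l)]; ring

lemma normSq_contDiffOn {Ω : Set (Fin n → ℝ)} (hΩ : IsOpen Ω) {u : (Fin n → ℝ) → ℝ}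
    (hu : ContDiffOn ℝ 3 u Ω) : ContDiffOn ℝ 2 (fun y => normSq (grad u y)) Ω := by
  simp only [normSq, grad]
  exact ContDiffOn.sum fun l _ => (pd_contDiffOn hΩ hu (a := 2) (by norm_num) l).pow 2

end Calc


section IBP
variable {n : ℕ}

lemma contOn_int {F : (Fin n → ℝ) → ℝ} {x₀ : Fin n → ℝ} {r : ℝ}
    (h : ContinuousOn F (closedBall x₀ r)) : IntegrableOn F (ball x₀ r) :=
  (h.integrableOn_compact (isCompact_closedBall x₀ r)).mono_set ball_subset_closedBall

lemma ibp_lip {w b : (Fin n → ℝ) → ℝ} (hw : ContDiff ℝ 1 w) {x₀ : Fin n → ℝ} {r : ℝ}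
    (hw0 : ∀ x, x ∉ closedBall x₀ r → w x = 0) {L : NNReal} {S : Set (Fin n → ℝ)}
    (hb : LipschitzOnWith L b S) (hS : closedBall x₀ r ⊆ S) (j : Fin n) :
    |∫ x, b x * pd j w x| ≤ L * ∫ x, |w x| := by
  obtain ⟨g, hg, hgb⟩ := hb.extend_real
  have hcs : HasCompactSupport w :=
    HasCompactSupport.intro (isCompact_closedBall x₀ r) (fun x hx => hw0 x hx)
  obtain ⟨D, hD⟩ := ContDiff.lipschitzWith_of_hasCompactSupport hcs hw (by simp)
  have hts : tsupport w ⊆ closedBall x₀ r :=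
    closure_minimal (fun x hx => by by_contra h; exact hx (hw0 x h)) isClosed_closedBall
  have e1 : (fun x => b x * pd j w x) = fun x => g x * pd j w x := by
    funext x
    by_cases hx : x ∈ closedBall x₀ r
    · rw [hgb (hS hx)]
    · have : pd j w x = 0 := by
        unfold pd
        have : x ∉ Function.support (fderiv ℝ w) := fun h =>
          hx (hts (support_fderiv_subset ℝ h))
        simp only [Function.mem_support, not_not] at this
        simp [this]
      simp [this]
  have e2 := LipschitzWith.integral_lineDeriv_mul_eq (μ := (volume : Measure (Fin n → ℝ)))
    hg hD hcs (Pi.single j 1)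
  have e3 : ∀ x, lineDeriv ℝ w x (-(Pi.single j 1)) * g x = -(g x * pd j w x) := by
    intro x
    rw [((hw.differentiable (by simp)) x).lineDeriv_eq_fderiv, map_neg]
    unfold pd; ring
  simp only [e3, integral_neg] at e2
  rw [e1, ← abs_neg, ← e2]
  have hwi : Integrable (fun x => (L:ℝ) * |w x|) := 
    ((hw.continuous.integrable_of_hasCompactSupport hcs).abs).const_mul _
  rw [← integral_const_mul, ← Real.norm_eq_abs]
  refine norm_integral_le_of_norm_le hwi (Filter.Eventually.of_forall fun x => ?_)
  rw [norm_mul, Real.norm_eq_abs (w x)]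
  refine mul_le_mul_of_nonneg_right ?_ (abs_nonneg _)
  refine (norm_lineDeriv_le_of_lipschitz ℝ hg).trans ?_
  simp [Pi.norm_single]

lemma ibp_field {η V b : (Fin n → ℝ) → ℝ} {Z : Fin n → (Fin n → ℝ) → ℝ} {O S : Set (Fin n → ℝ)}
    (hO : IsOpen O) {x₀ : Fin n → ℝ} {r : ℝ} (hOr : closedBall x₀ r ⊆ O)
    (hη : ContDiff ℝ 1 η) (hη0 : ∀ x, x ∉ ball x₀ r → η x = 0) (hηp : ∀ x, 0 ≤ η x)
    (hV : ContDiffOn ℝ 1 V O) (hZ : ∀ j, ContDiffOn ℝ 1 (Z j) O)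
    {L : NNReal} (hb : LipschitzOnWith L b S) (hS : closedBall x₀ r ⊆ S)
    {L0 : ℝ} (hb0 : ∀ x ∈ ball x₀ r, |b x| ≤ L0) :
    |∫ x in ball x₀ r, b x * (η x * ∑ j, Z j x * pd j V x)| ≤
      ∫ x in ball x₀ r, |V x| * (L * (η x * ∑ j, |Z j x|)
        + L0 * |∑ j, pd j η x * Z j x + η x * ∑ j, pd j (Z j) x|) := by
  set w : Fin n → (Fin n → ℝ) → ℝ := fun j x => η x * (V x * Z j x) with hwdef
  have hdη : ∀ x, DifferentiableAt ℝ η x := fun x => hη.differentiable (by simp) x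
  have hwc : ∀ j, ContDiff ℝ 1 (w j) := by
    intro j
    rw [contDiff_iff_contDiffAt]
    intro x
    by_cases hx : x ∈ O
    · exact hη.contDiffAt.mul (((hV.mul (hZ j)).contDiffAt (hO.mem_nhds hx)))
    · have hx' : x ∈ (closedBall x₀ r)ᶜ := fun h => hx (hOr h)
      have : w j =ᶠ[nhds x] fun _ => 0 := by
        filter_upwards [isClosed_closedBall.isOpen_compl.mem_nhds hx'] with y hy
        simp [hwdef, hη0 y (fun h => hy (ball_subset_closedBall h))]
      exact contDiffAt_const.congr_of_eventuallyEq this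
  have hw0 : ∀ j x, x ∉ ball x₀ r → w j x = 0 := fun j x hx => by simp [hwdef, hη0 x hx]
  have hpdη : ∀ j x, x ∉ ball x₀ r → pd j η x = 0 := by
    intro j x hx
    have : IsLocalMin η x := Filter.Eventually.of_forall fun y => by rw [hη0 x hx]; exact hηp y
    unfold pd; rw [this.fderiv_eq_zero]; simp
  have hpdw : ∀ j, ∀ x ∈ O, pd j (w j) x = η x * (Z j x * pd j V x)
      + V x * (pd j η x * Z j x + η x * pd j (Z j) x) := by
    intro j x hx
    have d1 := dAt hO hV le_rfl hx
    have d2 := dAt hO (hZ j) le_rfl hx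
    simp only [hwdef]
    rw [pd_mul (hdη x) (d1.fun_mul d2), pd_mul d1 d2]; ring
  have hpdw0 : ∀ j x, x ∉ ball x₀ r → pd j (w j) x = 0 := by
    intro j x hx
    by_cases hxO : x ∈ O
    · rw [hpdw j x hxO, hη0 x hx, hpdη j x hx]; ring
    · have hx' : x ∈ (closedBall x₀ r)ᶜ := fun h => hxO (hOr h)
      rw [pd_congr (g := fun _ => 0) isClosed_closedBall.isOpen_compl hx'
        (fun y hy => hw0 j y (fun h => hy (ball_subset_closedBall h))), pd_const]
  -- continuity
  have cη : ContinuousOn η (closedBall x₀ r) := hη.continuous.continuousOn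
  have cV := hV.continuousOn.mono hOr
  have cZ := fun j => (hZ j).continuousOn.mono hOr
  have cb := hb.continuousOn.mono hS
  have cpη : ∀ j, ContinuousOn (pd j η) (closedBall x₀ r) := fun j =>
    ((pd_contDiffOn isOpen_univ hη.contDiffOn (a := 0) (by norm_num) j).continuousOn).mono
      (subset_univ _)
  have cpV : ∀ j, ContinuousOn (pd j V) (closedBall x₀ r) := fun j =>
    ((pd_contDiffOn hO hV (a := 0) (by norm_num) j).continuousOn).mono hOr
  have cpZ : ∀ j, ContinuousOn (pd j (Z j)) (closedBall x₀ r) := fun j =>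
    ((pd_contDiffOn hO (hZ j) (a := 0) (by norm_num) j).continuousOn).mono hOr
  have cpw : ∀ j, ContinuousOn (pd j (w j)) (closedBall x₀ r) := fun j =>
    ((pd_contDiffOn isOpen_univ (hwc j).contDiffOn (a := 0) (by norm_num) j).continuousOn).mono
      (subset_univ _)
  have cZs : ContinuousOn (fun x => ∑ j, |Z j x|) (closedBall x₀ r) :=
    continuousOn_finsetSum _ fun j _ => (cZ j).abs
  have cD : ContinuousOn (fun x => ∑ j, pd j η x * Z j x + η x * ∑ j, pd j (Z j) x)
      (closedBall x₀ r) :=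
    (continuousOn_finsetSum _ fun j _ => (cpη j).mul (cZ j)).add
      (cη.mul (continuousOn_finsetSum _ fun j _ => cpZ j))
  have cw : ∀ j, ContinuousOn (w j) (closedBall x₀ r) := fun j => (hwc j).continuous.continuousOn
  have key : ∫ x in ball x₀ r, b x * (η x * ∑ j, Z j x * pd j V x)
      = (∑ j, ∫ x, b x * pd j (w j) x)
        - ∫ x in ball x₀ r, b x * (V x * (∑ j, pd j η x * Z j x + η x * ∑ j, pd j (Z j) x)) := by
    have e : ∀ j, ∫ x, b x * pd j (w j) x = ∫ x in ball x₀ r, b x * pd j (w j) x := by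
      intro j
      rw [setIntegral_eq_integral_of_forall_compl_eq_zero]
      intro x hx; rw [hpdw0 j x hx, mul_zero]
    simp only [e]
    rw [← integral_finsetSum _ (fun j _ => contOn_int (cb.fun_mul (cpw j))),
      ← integral_sub (contOn_int (continuousOn_finsetSum _ fun j _ => cb.fun_mul (cpw j)))
        (contOn_int (cb.fun_mul (cV.fun_mul cD)))]
    refine setIntegral_congr_fun measurableSet_ball fun x hx => ?_
    have hxO := hOr (ball_subset_closedBall hx)
    simp only [hpdw _ x hxO]
    rw [← Finset.mul_sum, Finset.sum_add_distrib, ← Finset.mul_sum, ← Finset.mul_sum,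
      Finset.sum_add_distrib, ← Finset.mul_sum]
    ring
  rw [key]
  have b1 : |∑ j, ∫ x, b x * pd j (w j) x| ≤
      ∫ x in ball x₀ r, |V x| * (L * (η x * ∑ j, |Z j x|)) := by
    calc |∑ j, ∫ x, b x * pd j (w j) x| ≤ ∑ j, (L * ∫ x, |w j x|) :=
          (Finset.abs_sum_le_sum_abs _ _).trans (Finset.sum_le_sum fun j _ =>
            ibp_lip (hwc j) (fun x hx => hw0 j x (fun h => hx (ball_subset_closedBall h))) hb hS j)
      _ = ∑ j, ∫ x in ball x₀ r, L * |w j x| := by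
          refine Finset.sum_congr rfl fun j _ => ?_
          rw [integral_const_mul, setIntegral_eq_integral_of_forall_compl_eq_zero]
          intro x hx; rw [hw0 j x hx, abs_zero]
      _ = ∫ x in ball x₀ r, |V x| * (L * (η x * ∑ j, |Z j x|)) := by
          rw [← integral_finsetSum _ (fun j _ => (contOn_int (cw j).abs).const_mul _)]
          congr 1; funext x
          simp only [hwdef, abs_mul, abs_of_nonneg (hηp x), Finset.mul_sum]
          exact Finset.sum_congr rfl fun j _ => by ring
  have b2 : |∫ x in ball x₀ r, b x * (V x * (∑ j, pd j η x * Z j x + η x * ∑ j, pd j (Z j) x))| ≤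
      ∫ x in ball x₀ r, |V x| * (L0 * |∑ j, pd j η x * Z j x + η x * ∑ j, pd j (Z j) x|) := by
    rw [← Real.norm_eq_abs]
    refine norm_integral_le_of_norm_le (contOn_int (cV.abs.fun_mul (continuousOn_const.fun_mul cD.abs))) ?_
    filter_upwards [ae_restrict_mem measurableSet_ball] with x hx
    rw [Real.norm_eq_abs, abs_mul, abs_mul]
    have := mul_le_mul_of_nonneg_right (hb0 x hx) (mul_nonneg (abs_nonneg (V x)) 
      (abs_nonneg (∑ j, pd j η x * Z j x + η x * ∑ j, pd j (Z j) x)))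
    linarith
  refine (abs_sub _ _).trans ((add_le_add b1 b2).trans (le_of_eq ?_))
  rw [← integral_add (contOn_int (cV.abs.fun_mul (continuousOn_const.fun_mul (cη.fun_mul cZs))))
    (contOn_int (cV.abs.fun_mul (continuousOn_const.fun_mul cD.abs)))]
  congr 1; funext x; ring

end IBP


/-- domination by a power of a weight, uniformly in all states. -/
def Dom {ι : Type*} (w : ι → ℝ) (m : ℕ) (F : ι → ℝ) : Prop :=
  ∃ C : ℝ, 0 ≤ C ∧ ∀ s, |F s| ≤ C * w s ^ m

section DomRules
variable {ι : Type*} {w : ι → ℝ}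

lemma Dom.of_bound {F : ι → ℝ} (hw : ∀ s, 1 ≤ w s) (m : ℕ) (C : ℝ) (h : ∀ s, |F s| ≤ C) :
    Dom w m F := by
  refine ⟨|C|, abs_nonneg _, fun s => (h s).trans ((le_abs_self C).trans ?_)⟩
  exact le_mul_of_one_le_right (abs_nonneg _) (one_le_pow₀ (hw s))

lemma Dom.add {m : ℕ} {F G : ι → ℝ} (hw : ∀ s, 1 ≤ w s) (hF : Dom w m F) (hG : Dom w m G) :
    Dom w m (fun s => F s + G s) := by
  obtain ⟨C, hC, h⟩ := hF
  obtain ⟨D, hD, h'⟩ := hG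
  refine ⟨C + D, by positivity, fun s => (abs_add_le _ _).trans ?_⟩
  rw [add_mul]; exact add_le_add (h s) (h' s)

lemma Dom.neg {m : ℕ} {F : ι → ℝ} (hF : Dom w m F) : Dom w m (fun s => - F s) := by
  obtain ⟨C, hC, h⟩ := hF
  exact ⟨C, hC, fun s => by rw [abs_neg]; exact h s⟩

lemma Dom.sub {m : ℕ} {F G : ι → ℝ} (hw : ∀ s, 1 ≤ w s) (hF : Dom w m F) (hG : Dom w m G) :
    Dom w m (fun s => F s - G s) := by
  simpa [sub_eq_add_neg] using hF.add hw hG.neg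

lemma Dom.mono {m m' : ℕ} {F : ι → ℝ} (hw : ∀ s, 1 ≤ w s) (hF : Dom w m F) (h : m ≤ m') :
    Dom w m' F := by
  obtain ⟨C, hC, h'⟩ := hF
  exact ⟨C, hC, fun s => (h' s).trans
    (mul_le_mul_of_nonneg_left (pow_le_pow_right₀ (hw s) h) hC)⟩

lemma Dom.mul {a b m : ℕ} {F G : ι → ℝ} (hw : ∀ s, 1 ≤ w s) (hF : Dom w a F) (hG : Dom w b G)
    (h : a + b ≤ m) : Dom w m (fun s => F s * G s) := by
  refine Dom.mono hw (m := a + b) ?_ h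
  obtain ⟨C, hC, h⟩ := hF
  obtain ⟨D, hD, h'⟩ := hG
  refine ⟨C * D, by positivity, fun s => ?_⟩
  rw [abs_mul]
  refine (mul_le_mul (h s) (h' s) (abs_nonneg _) ?_).trans (le_of_eq (by ring))
  have := hw s; positivity

lemma Dom.sum {κ : Type*} {S : Finset κ} {m : ℕ} {F : κ → ι → ℝ} (hw : ∀ s, 1 ≤ w s)
    (hF : ∀ i, Dom w m (F i)) : Dom w m (fun s => ∑ i ∈ S, F i s) := by
  classical
  induction S using Finset.induction_on with
  | empty => exact Dom.of_bound hw m 0 (by simp)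
  | insert a S ha ih => simp only [Finset.sum_insert ha]; exact (hF a).add hw ih

lemma Dom.const (hw : ∀ s, 1 ≤ w s) (m : ℕ) (c : ℝ) : Dom w m (fun _ => c) :=
  Dom.of_bound hw m |c| (fun _ => le_rfl)

end DomRules

section States
variable {n : ℕ}

lemma abs_le_vnorm (v : Fin n → ℝ) (i : Fin n) : |v i| ≤ vnorm v := by
  unfold vnorm
  apply Real.abs_le_sqrt
  exact Finset.single_le_sum (f := fun i => v i ^ 2) (fun _ _ => sq_nonneg _) (Finset.mem_univ i)

lemma abs_le_matNorm (A : Matrix (Fin n) (Fin n) ℝ) (i j : Fin n) : |A i j| ≤ matNorm A := by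
  unfold matNorm
  set T := LinearMap.toContinuousLinearMap (Matrix.toEuclideanLin A)
  have h1 := T.le_opNorm (EuclideanSpace.single j (1:ℝ))
  have h2 : (T (EuclideanSpace.single j (1:ℝ))) i = A i j := by
    simp [T, Matrix.toEuclideanLin_apply]
  have h3 := PiLp.norm_apply_le (T (EuclideanSpace.single j (1:ℝ))) i
  rw [h2, Real.norm_eq_abs] at h3
  simpa using h3.trans h1

/-- the scalar `H₁(y,u)|∇u|²`. -/
noncomputable def phi (H₁ : ((Fin n → ℝ) × ℝ) → ℝ) (u : (Fin n → ℝ) → ℝ) (y : Fin n → ℝ) : ℝ :=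
  H₁ (y, u y) * normSq (grad u y)

/-- admissible solutions. -/
structure Adm (k : ℕ) (Ω : Set (Fin n → ℝ)) (f : ((Fin n → ℝ) × ℝ × (Fin n → ℝ)) → ℝ)
    (H₁ : ((Fin n → ℝ) × ℝ) → ℝ) (x₀ : Fin n → ℝ) (R M : ℝ) (u : (Fin n → ℝ) → ℝ) (C₁ : ℝ) :
    Prop where
  hu : ContDiffOn ℝ 3 u Ω
  heq : ∀ x ∈ Ω, esymmMat k (Aug u (phi H₁ u) x) = f (x, u x, grad u x) ^ k ∧
    GammaPlus k (Aug u (phi H₁ u) x)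
  hM : ∀ x ∈ ball x₀ (2 * R), |u x| + vnorm (grad u x) ≤ M
  h1 : ∀ x ∈ ball x₀ (2 * R), 1 ≤ lapl u x + C₁ ∧ matNorm (hess u x) ≤ lapl u x + C₁

/-- states: an admissible solution with a point. -/
structure St (k : ℕ) (Ω : Set (Fin n → ℝ)) (f : ((Fin n → ℝ) × ℝ × (Fin n → ℝ)) → ℝ)
    (H₁ : ((Fin n → ℝ) × ℝ) → ℝ) (x₀ : Fin n → ℝ) (R M : ℝ) where
  u : (Fin n → ℝ) → ℝ
  C₁ : ℝ
  x : Fin n → ℝ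
  adm : Adm k Ω f H₁ x₀ R M u C₁
  hx : x ∈ ball x₀ (2 * R)

variable {k : ℕ} {Ω : Set (Fin n → ℝ)} {f : ((Fin n → ℝ) × ℝ × (Fin n → ℝ)) → ℝ}
    {H₁ : ((Fin n → ℝ) × ℝ) → ℝ} {x₀ : Fin n → ℝ} {R M : ℝ}

/-- weight. -/
noncomputable def wt (s : St k Ω f H₁ x₀ R M) : ℝ := lapl s.u s.x + s.C₁

lemma one_le_wt (s : St k Ω f H₁ x₀ R M) : 1 ≤ wt s := (s.adm.h1 s.x s.hx).1

lemma dom_grad (i : Fin n) : Dom wt 0 (fun s : St k Ω f H₁ x₀ R M => pd i s.u s.x) := by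
  refine Dom.of_bound one_le_wt 0 M fun s => ?_
  have h1 := s.adm.hM s.x s.hx
  have h2 := abs_le_vnorm (grad s.u s.x) i
  have h3 := abs_nonneg (s.u s.x)
  simp only [grad] at *
  linarith

lemma dom_hess (i j : Fin n) : Dom wt 1 (fun s : St k Ω f H₁ x₀ R M => pd i (pd j s.u) s.x) := by
  refine ⟨1, zero_le_one, fun s => ?_⟩
  rw [one_mul, pow_one]
  exact (abs_le_matNorm (hess s.u s.x) i j).trans (s.adm.h1 s.x s.hx).2

lemma dom_normSq : Dom wt 0 (fun s : St k Ω f H₁ x₀ R M => normSq (grad s.u s.x)) := by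
  simp only [normSq, grad, pow_two]
  exact Dom.sum one_le_wt fun i => (dom_grad i).mul one_le_wt (dom_grad i) le_rfl

lemma u_mem_Icc {u : (Fin n → ℝ) → ℝ} {C₁ : ℝ} (h : Adm k Ω f H₁ x₀ R M u C₁) {x : Fin n → ℝ}
    (hx : x ∈ ball x₀ (2 * R)) :
    (x, u x) ∈ closedBall x₀ (2 * R) ×ˢ Icc (-M) M := by
  refine ⟨ball_subset_closedBall hx, abs_le.1 ?_⟩
  have h1 := h.hM x hx
  have h2 : 0 ≤ vnorm (grad u x) := Real.sqrt_nonneg _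
  simp only
  linarith

variable (hΩ : IsOpen Ω) (hball : closedBall x₀ (2 * R) ⊆ Ω)
    (hH : ContDiffOn ℝ 1 H₁ (Ω ×ˢ (univ : Set ℝ)))

lemma K_compact : IsCompact (closedBall x₀ (2 * R) ×ˢ Icc (-M) M : Set ((Fin n → ℝ) × ℝ)) :=
  (isCompact_closedBall _ _).prod isCompact_Icc

include hball in
lemma K_sub : (closedBall x₀ (2 * R) ×ˢ Icc (-M) M : Set ((Fin n → ℝ) × ℝ)) ⊆ Ω ×ˢ univ :=
  prod_mono hball (subset_univ _)

include hball hH in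
lemma dom_a : Dom wt 0 (fun s : St k Ω f H₁ x₀ R M => H₁ (s.x, s.u s.x)) := by
  obtain ⟨C, hC⟩ := (K_compact (x₀ := x₀) (R := R) (M := M)).exists_bound_of_continuousOn
    (hH.continuousOn.mono (K_sub hball))
  exact Dom.of_bound one_le_wt 0 C fun s => hC _ (u_mem_Icc s.adm s.hx)

include hΩ hball hH in
lemma dH_bound : ∃ C : ℝ, 0 ≤ C ∧ ∀ p ∈ closedBall x₀ (2 * R) ×ˢ Icc (-M) M,
    ‖fderiv ℝ H₁ p‖ ≤ C := by
  have h := (hH.fderiv_of_isOpen (hΩ.prod isOpen_univ) (m := 0) (by norm_num)).continuousOn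
  obtain ⟨C, hC⟩ := (K_compact (x₀ := x₀) (R := R) (M := M)).exists_bound_of_continuousOn
    (h.mono (K_sub hball))
  exact ⟨|C|, abs_nonneg _, fun p hp => (hC p hp).trans (le_abs_self C)⟩

lemma apply_le_norm (T : ((Fin n → ℝ) × ℝ) →L[ℝ] ℝ) (v : (Fin n → ℝ) × ℝ) (hv : ‖v‖ ≤ 1) :
    |T v| ≤ ‖T‖ := by
  have := T.le_opNorm v
  rw [Real.norm_eq_abs] at this
  nlinarith [norm_nonneg T]

lemma norm_e (i : Fin n) : ‖((Pi.single i 1, 0) : (Fin n → ℝ) × ℝ)‖ ≤ 1 := by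
  simp [Prod.norm_def, Pi.norm_single]
lemma norm_e0 : ‖((0, 1) : (Fin n → ℝ) × ℝ)‖ ≤ 1 := by
  simp [Prod.norm_def]

include hΩ hball hH in
lemma dom_b (i : Fin n) : Dom wt 0 (fun s : St k Ω f H₁ x₀ R M =>
    fderiv ℝ H₁ (s.x, s.u s.x) (Pi.single i 1, 0)) := by
  obtain ⟨C, -, hC⟩ := dH_bound (M := M) hΩ hball hH
  exact Dom.of_bound one_le_wt 0 C fun s => (apply_le_norm _ _ (norm_e i)).trans
    (hC _ (u_mem_Icc s.adm s.hx))

include hΩ hball hH in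
lemma dom_b0 : Dom wt 0 (fun s : St k Ω f H₁ x₀ R M => fderiv ℝ H₁ (s.x, s.u s.x) (0, 1)) := by
  obtain ⟨C, -, hC⟩ := dH_bound (M := M) hΩ hball hH
  exact Dom.of_bound one_le_wt 0 C fun s => (apply_le_norm _ _ norm_e0).trans
    (hC _ (u_mem_Icc s.adm s.hx))

lemma St.memΩ (hball : closedBall x₀ (2 * R) ⊆ Ω) (s : St k Ω f H₁ x₀ R M) : s.x ∈ Ω :=
  hball (ball_subset_closedBall s.hx)

include hH in
lemma a_contDiffOn {u : (Fin n → ℝ) → ℝ} (hu : ContDiffOn ℝ 3 u Ω) :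
    ContDiffOn ℝ 1 (fun y => H₁ (y, u y)) Ω :=
  hH.comp (contDiffOn_id.prodMk (hu.of_le (by norm_num))) (fun y hy => ⟨hy, mem_univ _⟩)

include hΩ hH in
lemma phi_contDiffOn {u : (Fin n → ℝ) → ℝ} (hu : ContDiffOn ℝ 3 u Ω) :
    ContDiffOn ℝ 1 (phi H₁ u) Ω :=
  (a_contDiffOn hH hu).mul ((normSq_contDiffOn hΩ hu).of_le (by norm_num))

include hΩ hH in
lemma pd_a {u : (Fin n → ℝ) → ℝ} (hu : ContDiffOn ℝ 3 u Ω) {x} (hx : x ∈ Ω) (i : Fin n) :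
    pd i (fun y => H₁ (y, u y)) x = fderiv ℝ H₁ (x, u x) (Pi.single i 1, 0)
      + fderiv ℝ H₁ (x, u x) (0, 1) * pd i u x :=
  pd_comp ((hH.contDiffAt ((hΩ.prod isOpen_univ).mem_nhds ⟨hx, mem_univ _⟩)).differentiableAt
    (by simp)) (dAt hΩ hu (by norm_num) hx) i

include hΩ hH in
lemma pd_phi {u : (Fin n → ℝ) → ℝ} (hu : ContDiffOn ℝ 3 u Ω) {x} (hx : x ∈ Ω) (i : Fin n) :
    pd i (phi H₁ u) x = (fderiv ℝ H₁ (x, u x) (Pi.single i 1, 0)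
      + fderiv ℝ H₁ (x, u x) (0, 1) * pd i u x) * normSq (grad u x)
      + H₁ (x, u x) * ∑ l, 2 * pd l u x * pd i (pd l u) x := by
  have e : phi H₁ u = fun y => H₁ (y, u y) * normSq (grad u y) := rfl
  rw [e, pd_mul (dAt hΩ (a_contDiffOn hH hu) le_rfl hx)
    (dAt hΩ (normSq_contDiffOn hΩ hu) (by norm_num) hx), pd_a hΩ hH hu hx, pd_normSq hΩ hu hx]

include hΩ hball hH

lemma dom_pd_a (i : Fin n) :
    Dom wt 0 (fun s : St k Ω f H₁ x₀ R M => pd i (fun y => H₁ (y, s.u y)) s.x) := by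
  simp only [fun s : St k Ω f H₁ x₀ R M => pd_a hΩ hH s.adm.hu (s.memΩ hball) i]
  exact (dom_b hΩ hball hH i).add one_le_wt
    ((dom_b0 hΩ hball hH).mul one_le_wt (dom_grad i) le_rfl)

lemma dom_pd_normSq (i : Fin n) :
    Dom wt 1 (fun s : St k Ω f H₁ x₀ R M => pd i (fun y => normSq (grad s.u y)) s.x) := by
  simp only [fun s : St k Ω f H₁ x₀ R M => pd_normSq hΩ s.adm.hu (s.memΩ hball) i]
  exact Dom.sum one_le_wt fun l => (((Dom.const one_le_wt 0 2).mul one_le_wt (dom_grad l)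
    le_rfl).mul one_le_wt (dom_hess i l) le_rfl)

lemma dom_phi : Dom wt 0 (fun s : St k Ω f H₁ x₀ R M => phi H₁ s.u s.x) :=
  (dom_a hball hH).mul one_le_wt dom_normSq le_rfl

lemma dom_pd_phi (i : Fin n) :
    Dom wt 1 (fun s : St k Ω f H₁ x₀ R M => pd i (phi H₁ s.u) s.x) := by
  have : ∀ s : St k Ω f H₁ x₀ R M, pd i (phi H₁ s.u) s.x
      = pd i (fun y => H₁ (y, s.u y)) s.x * normSq (grad s.u s.x)
        + H₁ (s.x, s.u s.x) * pd i (fun y => normSq (grad s.u y)) s.x := by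
    intro s
    rw [pd_phi hΩ hH s.adm.hu (s.memΩ hball), pd_a hΩ hH s.adm.hu (s.memΩ hball),
      pd_normSq hΩ s.adm.hu (s.memΩ hball)]
  simp only [this]
  exact ((dom_pd_a hΩ hball hH i).mul one_le_wt dom_normSq (by norm_num)).add one_le_wt
    ((dom_a hball hH).mul one_le_wt (dom_pd_normSq hΩ hball hH i) (by norm_num))

lemma dom_Aug (i j : Fin n) :
    Dom wt 1 (fun s : St k Ω f H₁ x₀ R M => Aug s.u (phi H₁ s.u) s.x i j) := by
  simp only [Aug_apply]
  exact (dom_hess i j).sub one_le_wt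
    ((dom_phi hΩ hball hH).mul one_le_wt (Dom.const one_le_wt 0 _) (by norm_num))

lemma dom_esymm (m : ℕ) (hm : m ≤ n) :
    Dom wt m (fun s : St k Ω f H₁ x₀ R M => esymmMat m (Aug s.u (phi H₁ s.u) s.x)) := by
  choose C hC0 hC using fun i j => dom_Aug (k := k) (f := f) (M := M) hΩ hball hH i j
  obtain ⟨D, hD0, hD⟩ := mvp_bound (esP n m) m (esP_hom m hm)
  set B := ∑ i, ∑ j, C i j
  have hB : ∀ i j, C i j ≤ B := fun i j =>
    (Finset.single_le_sum (f := fun j => C i j) (fun _ _ => hC0 _ _) (Finset.mem_univ j)).trans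
      (Finset.single_le_sum (f := fun i => ∑ j, C i j)
        (fun i _ => Finset.sum_nonneg fun _ _ => hC0 _ _) (Finset.mem_univ i))
  have hB0 : 0 ≤ B := Finset.sum_nonneg fun _ _ => Finset.sum_nonneg fun _ _ => hC0 _ _
  refine ⟨D * B ^ m, by positivity, fun s => ?_⟩
  have hw := one_le_wt s
  show |esymmMat m (Aug s.u (phi H₁ s.u) s.x)| ≤ _
  rw [esymm_eq_eval]
  refine (hD _ (B * wt s) (by positivity) (fun p => ?_)).trans (le_of_eq (by ring))
  have := hC p.1 p.2 s
  rw [pow_one] at this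
  exact this.trans (mul_le_mul_of_nonneg_right (hB _ _) (by linarith))

lemma dom_newton (m : ℕ) (hm : m ≤ n) (i j : Fin n) :
    Dom wt m (fun s : St k Ω f H₁ x₀ R M => newtonT m (Aug s.u (phi H₁ s.u) s.x) i j) := by
  induction m generalizing i j with
  | zero => exact Dom.const one_le_wt 0 _
  | succ m ih =>
    simp only [newtonT, Matrix.sub_apply, Matrix.smul_apply, Matrix.mul_apply, smul_eq_mul]
    exact ((dom_esymm hΩ hball hH (m+1) hm).mul one_le_wt (Dom.const one_le_wt 0 _) le_rfl).sub
      one_le_wt (Dom.sum one_le_wt fun l =>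
        (ih (by omega) i l).mul one_le_wt (dom_Aug hΩ hball hH l j) le_rfl)

lemma dom_divT (m : ℕ) (hm : m ≤ n) (j : Fin n) :
    Dom wt m (fun s : St k Ω f H₁ x₀ R M =>
      ∑ i, pd i (fun y => newtonT m (Aug s.u (phi H₁ s.u) y) i j) s.x) := by
  cases m with
  | zero => simp only [newtonT, pd_const]; simpa using Dom.const one_le_wt 0 0
  | succ m =>
    simp only [fun s : St k Ω f H₁ x₀ R M => div_newton hΩ s.adm.hu
      (phi_contDiffOn hΩ hH s.adm.hu) (s.memΩ hball) m hm j]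
    exact (Dom.const one_le_wt 0 _).mul one_le_wt (Dom.sum one_le_wt fun i =>
      (dom_newton hΩ hball hH m (by omega) i j).mul one_le_wt (dom_pd_phi hΩ hball hH i) le_rfl)
      (by omega)

/-- divergence of `c T_m ∇u`. -/
lemma dom_divF (m e N : ℕ) (hm : m ≤ n) (c : St k Ω f H₁ x₀ R M → (Fin n → ℝ) → ℝ)
    (hc : ∀ s, ContDiffOn ℝ 1 (c s) Ω) (hc0 : Dom wt 0 (fun s => c s s.x))
    (hc1 : ∀ j, Dom wt e (fun s => pd j (c s) s.x)) (heN : e + m ≤ N)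
    (hT : Dom wt N (fun s : St k Ω f H₁ x₀ R M => ∑ j, ∑ l,
      newtonT m (Aug s.u (phi H₁ s.u) s.x) j l * pd j (pd l s.u) s.x)) :
    Dom wt N (fun s => ∑ j, pd j (fun y => c s y * ∑ l,
      newtonT m (Aug s.u (phi H₁ s.u) y) j l * pd l s.u y) s.x) := by
  have key : ∀ s : St k Ω f H₁ x₀ R M, ∑ j, pd j (fun y => c s y * ∑ l,
      newtonT m (Aug s.u (phi H₁ s.u) y) j l * pd l s.u y) s.x
      = ∑ j, pd j (c s) s.x * ∑ l, newtonT m (Aug s.u (phi H₁ s.u) s.x) j l * pd l s.u s.x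
        + c s s.x * (∑ l, (∑ j, pd j (fun y => newtonT m (Aug s.u (phi H₁ s.u) y) j l) s.x)
            * pd l s.u s.x
          + ∑ j, ∑ l, newtonT m (Aug s.u (phi H₁ s.u) s.x) j l * pd j (pd l s.u) s.x) := by
    intro s
    have hx := s.memΩ hball
    have d1 := dAt hΩ (hc s) le_rfl hx
    have d2 : ∀ j l, DifferentiableAt ℝ (fun y => newtonT m (Aug s.u (phi H₁ s.u) y) j l) s.x :=
      fun j l => dAt hΩ (newtonAug_contDiffOn hΩ s.adm.hu (phi_contDiffOn hΩ hH s.adm.hu) m j l)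
        le_rfl hx
    have d3 : ∀ l, DifferentiableAt ℝ (pd l s.u) s.x := fun l =>
      dAt hΩ (pd_contDiffOn hΩ s.adm.hu (a := 2) (by norm_num) l) (by norm_num) hx
    have : ∀ j, pd j (fun y => c s y * ∑ l,
        newtonT m (Aug s.u (phi H₁ s.u) y) j l * pd l s.u y) s.x
        = pd j (c s) s.x * ∑ l, newtonT m (Aug s.u (phi H₁ s.u) s.x) j l * pd l s.u s.x
          + c s s.x * ∑ l, (pd j (fun y => newtonT m (Aug s.u (phi H₁ s.u) y) j l) s.x
            * pd l s.u s.x + newtonT m (Aug s.u (phi H₁ s.u) s.x) j l * pd j (pd l s.u) s.x) := by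
      intro j
      rw [pd_mul d1 (DifferentiableAt.fun_sum fun l _ => (d2 j l).fun_mul (d3 l)),
        pd_sum (fun l _ => (d2 j l).fun_mul (d3 l))]
      simp only [pd_mul (d2 j _) (d3 _)]
    simp only [this, Finset.sum_add_distrib]
    congr 1
    rw [← Finset.mul_sum, Finset.sum_add_distrib]
    simp only [Finset.sum_mul]
    rw [Finset.sum_comm]
  simp only [key]
  refine (Dom.sum one_le_wt fun j => (hc1 j).mul one_le_wt (Dom.sum one_le_wt fun l =>
    (dom_newton hΩ hball hH m hm j l).mul one_le_wt (dom_grad l) le_rfl) heN).add one_le_wt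
    (hc0.mul one_le_wt (Dom.add one_le_wt (m := N) (Dom.sum one_le_wt fun l => ?_) hT) (by omega))
  exact (dom_divT hΩ hball hH m hm l).mul one_le_wt (dom_grad l) (by omega)

end States


section Fields
variable {n : ℕ} {k : ℕ} {Ω : Set (Fin n → ℝ)} {f : ((Fin n → ℝ) × ℝ × (Fin n → ℝ)) → ℝ}
    {H₁ : ((Fin n → ℝ) × ℝ) → ℝ} {x₀ : Fin n → ℝ} {R M : ℝ}

lemma lapl_contOn (hΩ : IsOpen Ω) {u : (Fin n → ℝ) → ℝ} (hu : ContDiffOn ℝ 3 u Ω) :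
    ContinuousOn (lapl u) Ω := by
  unfold lapl
  exact continuousOn_finsetSum _ fun l _ => (pd_contDiffOn hΩ (pd_contDiffOn hΩ hu (a := 2)
    (by norm_num) l) (a := 1) (by norm_num) l).continuousOn

/-- master estimate for one vector field. -/
lemma est_field (hΩ : IsOpen Ω) (hball : closedBall x₀ (2 * R) ⊆ Ω) (hR : 0 < R)
    {c₀ : ℝ} (hc₀ : 0 < c₀)
    (N : ℕ) (Z : ((Fin n → ℝ) → ℝ) → Fin n → (Fin n → ℝ) → ℝ)
    (b : ((Fin n → ℝ) → ℝ) → (Fin n → ℝ) → ℝ)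
    (hZ : ∀ u, ContDiffOn ℝ 3 u Ω → ∀ j, ContDiffOn ℝ 1 (Z u j) Ω)
    (hZ0 : ∀ j, Dom wt N (fun s : St k Ω f H₁ x₀ R M => Z s.u j s.x))
    (hZ1 : Dom wt N (fun s : St k Ω f H₁ x₀ R M => ∑ j, pd j (Z s.u j) s.x))
    (hb : ∃ (L : NNReal) (L0 : ℝ), 0 ≤ L0 ∧ ∀ u C₁, Adm k Ω f H₁ x₀ R M u C₁ →
      LipschitzOnWith L (b u) (ball x₀ (2 * R)) ∧ ∀ x ∈ ball x₀ (2 * R), |b u x| ≤ L0) :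
    ∃ C : ℝ, 0 ≤ C ∧ ∀ u C₁, Adm k Ω f H₁ x₀ R M u C₁ → ∀ ρ : ℝ, 0 < ρ → ρ ≤ R / 3 →
      ∀ η : (Fin n → ℝ) → ℝ, ContDiff ℝ 1 η → (∀ x, x ∉ ball x₀ (R + 2 * ρ) → η x = 0) →
      (∀ x, 0 ≤ η x ∧ η x ≤ 1) → (∀ x, vnorm (grad η x) ≤ c₀ / ρ) →
      ∀ (O : Set (Fin n → ℝ)) (V : (Fin n → ℝ) → ℝ), IsOpen O → closedBall x₀ (R + 2 * ρ) ⊆ O →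
      O ⊆ ball x₀ (2 * R) → ContDiffOn ℝ 1 V O →
      |∫ x in ball x₀ (R + 2 * ρ), b u x * (η x * ∑ j, Z u j x * pd j V x)|
        ≤ C / ρ * ∫ x in ball x₀ (R + 2 * ρ), |V x| * (lapl u x + C₁) ^ N := by
  obtain ⟨L, L0, hL0, hb⟩ := hb
  choose D hD0 hD using hZ0
  obtain ⟨E, hE0, hE⟩ := hZ1
  set S := ∑ j, D j with hS
  have hS0 : 0 ≤ S := Finset.sum_nonneg fun j _ => hD0 j
  refine ⟨(L * S + L0 * E) * (R / 3) + L0 * c₀ * S, by positivity, ?_⟩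
  intro u C₁ hA ρ hρ hρR η hη hη0 hη1 hη2 O V hO hOr hO2 hV
  have hO3 : O ⊆ Ω := hO2.trans (ball_subset_closedBall.trans hball)
  have hsub : ball x₀ (R + 2 * ρ) ⊆ ball x₀ (2 * R) := ball_subset_closedBall.trans (hOr.trans hO2)
  refine (ibp_field hO hOr hη hη0 (fun x => (hη1 x).1) hV
    (fun j => (hZ u hA.hu j).mono hO3) (hb u C₁ hA).1 (hOr.trans hO2)
    (L0 := L0) (fun x hx => (hb u C₁ hA).2 x (hsub hx))).trans ?_
  rw [← integral_const_mul]
  refine integral_mono_of_nonneg ?_ ?_ ?_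
  · refine Filter.Eventually.of_forall fun x => ?_
    have := (hη1 x).1
    positivity
  · refine (contOn_int ?_).const_mul _
    exact ((hV.continuousOn.mono hOr).abs).mul
      ((((lapl_contOn hΩ hA.hu).mono (hOr.trans hO3)).add continuousOn_const).pow N)
  · refine (ae_restrict_iff' measurableSet_ball).2 (Filter.Eventually.of_forall fun x hx => ?_)
    have hx2 := hsub hx
    let s : St k Ω f H₁ x₀ R M := ⟨u, C₁, x, hA, hx2⟩
    have hw : 1 ≤ lapl u x + C₁ := one_le_wt s
    have e0 : ∀ j, |Z u j x| ≤ D j * (lapl u x + C₁) ^ N := fun j => hD j s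
    have e1 : |∑ j, pd j (Z u j) x| ≤ E * (lapl u x + C₁) ^ N := hE s
    set W := (lapl u x + C₁) ^ N with hW
    have hW0 : 0 ≤ W := by positivity
    have e2 : ∑ j, |Z u j x| ≤ S * W := by
      rw [hS, Finset.sum_mul]; exact Finset.sum_le_sum fun j _ => e0 j
    have e3 : |∑ j, pd j η x * Z u j x| ≤ c₀ / ρ * (S * W) := by
      refine (Finset.abs_sum_le_sum_abs _ _).trans ?_
      refine le_trans ?_ (mul_le_mul_of_nonneg_left e2 (by positivity))
      rw [Finset.mul_sum]
      refine Finset.sum_le_sum fun j _ => ?_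
      rw [abs_mul]
      exact mul_le_mul_of_nonneg_right ((abs_le_vnorm (grad η x) j).trans (hη2 x)) (abs_nonneg _)
    have e4 : |η x * ∑ j, pd j (Z u j) x| ≤ E * W := by
      rw [abs_mul, abs_of_nonneg (hη1 x).1]
      nlinarith [(hη1 x).1, (hη1 x).2, abs_nonneg (∑ j, pd j (Z u j) x)]
    have e5 : η x * ∑ j, |Z u j x| ≤ S * W := by
      have : 0 ≤ ∑ j, |Z u j x| := Finset.sum_nonneg fun _ _ => abs_nonneg _
      nlinarith [(hη1 x).1, (hη1 x).2]
    have e6 : |∑ j, pd j η x * Z u j x + η x * ∑ j, pd j (Z u j) x|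
        ≤ c₀ / ρ * (S * W) + E * W := (abs_add_le _ _).trans (add_le_add e3 e4)
    have h1 : 1 ≤ (R / 3) / ρ := (one_le_div hρ).2 hρR
    show |V x| * _ ≤ _ * (|V x| * W)
    have : (L:ℝ) * (η x * ∑ j, |Z u j x|)
        + L0 * |∑ j, pd j η x * Z u j x + η x * ∑ j, pd j (Z u j) x|
        ≤ ((L * S + L0 * E) * (R / 3) + L0 * c₀ * S) / ρ * W := by
      calc _ ≤ (L:ℝ) * (S * W) + L0 * (c₀ / ρ * (S * W) + E * W) :=
            add_le_add (mul_le_mul_of_nonneg_left e5 L.2) (mul_le_mul_of_nonneg_left e6 hL0)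
        _ = (L * S + L0 * E) * W * 1 + L0 * c₀ * S / ρ * W := by ring
        _ ≤ (L * S + L0 * E) * W * ((R / 3) / ρ) + L0 * c₀ * S / ρ * W := by
            gcongr
        _ = _ := by ring
    calc _ ≤ |V x| * (((L * S + L0 * E) * (R / 3) + L0 * c₀ * S) / ρ * W) :=
          mul_le_mul_of_nonneg_left this (abs_nonneg _)
      _ = _ := by ring

/-- symmetry of the augmented Hessian. -/
lemma Aug_symm (hΩ : IsOpen Ω) {u φ : (Fin n → ℝ) → ℝ} (hu : ContDiffOn ℝ 3 u Ω) {x}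
    (hx : x ∈ Ω) : (Aug u φ x)ᵀ = Aug u φ x := by
  ext i j
  rw [Matrix.transpose_apply, Aug_apply, Aug_apply,
    pd_comm hΩ (hu.of_le (by norm_num)) hx j i]
  simp only [eq_comm]

lemma hess_eq_Aug (u φ : (Fin n → ℝ) → ℝ) (x) (i j : Fin n) :
    pd i (pd j u) x = Aug u φ x i j + φ x * (if i = j then 1 else 0) := by
  rw [Aug_apply]; ring

variable (hΩ : IsOpen Ω) (hball : closedBall x₀ (2 * R) ⊆ Ω)
    (hH : ContDiffOn ℝ 1 H₁ (Ω ×ˢ (univ : Set ℝ)))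

lemma dom_f (hball : closedBall x₀ (2 * R) ⊆ Ω)
    (hf : ContinuousOn f (Ω ×ˢ ((univ : Set ℝ) ×ˢ (univ : Set (Fin n → ℝ))))) (m N : ℕ) :
    Dom wt N (fun s : St k Ω f H₁ x₀ R M => f (s.x, s.u s.x, grad s.u s.x) ^ m) := by
  have hc : IsCompact (closedBall x₀ (2 * R) ×ˢ (Icc (-M) M ×ˢ closedBall (0 : Fin n → ℝ) M)) :=
    (isCompact_closedBall _ _).prod (isCompact_Icc.prod (isCompact_closedBall _ _))
  obtain ⟨C, hC⟩ := hc.exists_bound_of_continuousOn (hf.mono (prod_mono hball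
    (prod_mono (subset_univ _) (subset_univ _))))
  refine Dom.of_bound one_le_wt N (|C| ^ m) fun s => ?_
  rw [abs_pow]
  have h0 := u_mem_Icc s.adm s.hx
  have h1 : 0 ≤ |s.u s.x| := abs_nonneg _
  have h2 := s.adm.hM s.x s.hx
  have hM0 : 0 ≤ M := by
    have : 0 ≤ vnorm (grad s.u s.x) := Real.sqrt_nonneg _
    linarith
  have := hC (s.x, s.u s.x, grad s.u s.x) ⟨h0.1, h0.2, by
    rw [mem_closedBall_zero_iff, pi_norm_le_iff_of_nonneg hM0]
    intro i
    have := abs_le_vnorm (grad s.u s.x) i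
    rw [Real.norm_eq_abs]; linarith⟩
  exact pow_le_pow_left₀ (abs_nonneg _) (this.trans (le_abs_self C)) m

include hΩ hball hH

lemma dom_Thess0 (m : ℕ) (hm : m ≤ n) :
    Dom wt (m+1) (fun s : St k Ω f H₁ x₀ R M => ∑ j, ∑ l,
      newtonT m (Aug s.u (phi H₁ s.u) s.x) j l * pd j (pd l s.u) s.x) :=
  Dom.sum one_le_wt fun j => Dom.sum one_le_wt fun l =>
    (dom_newton hΩ hball hH m hm j l).mul one_le_wt (dom_hess j l) le_rfl

lemma dom_Thess1 (hf : ContinuousOn f (Ω ×ˢ ((univ : Set ℝ) ×ˢ (univ : Set (Fin n → ℝ)))))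
    (κ : ℕ) (hκ : κ + 2 ≤ n) :
    Dom wt (κ+1) (fun s : St (κ+2) Ω f H₁ x₀ R M => ∑ j, ∑ l,
      newtonT (κ+1) (Aug s.u (phi H₁ s.u) s.x) j l * pd j (pd l s.u) s.x) := by
  have key : ∀ s : St (κ+2) Ω f H₁ x₀ R M, (∑ j, ∑ l,
      newtonT (κ+1) (Aug s.u (phi H₁ s.u) s.x) j l * pd j (pd l s.u) s.x)
      = ((κ+1 : ℕ) + 1) * f (s.x, s.u s.x, grad s.u s.x) ^ (κ+2)
        + phi H₁ s.u s.x * (((n:ℝ) - (κ+1 : ℕ)) * esymmMat (κ+1) (Aug s.u (phi H₁ s.u) s.x)) := by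
    intro s
    rw [← (s.adm.heq s.x (s.memΩ hball)).1, ← trace_newton_mul _ (κ+1) hκ,
      ← trace_newton _ (κ+1) (by omega), Finset.mul_sum, ← Finset.sum_add_distrib]
    refine Finset.sum_congr rfl fun i _ => ?_
    have hs := Aug_symm (φ := phi H₁ s.u) hΩ s.adm.hu (s.memΩ hball)
    have : ∀ l, pd i (pd l s.u) s.x = Aug s.u (phi H₁ s.u) s.x l i
        + phi H₁ s.u s.x * (if i = l then 1 else 0) := by
      intro l
      rw [hess_eq_Aug s.u (phi H₁ s.u)]
      congr 1
      conv_lhs => rw [← hs]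
      rfl
    simp only [this, mul_add, Finset.sum_add_distrib]
    congr 1
    simp [mul_comm]
  simp only [key]
  exact ((Dom.const one_le_wt 0 _).mul one_le_wt (dom_f hball hf _ (κ+1)) (by omega)).add one_le_wt
    ((dom_phi hΩ hball hH).mul one_le_wt ((Dom.const one_le_wt 0 _).mul one_le_wt
      (dom_esymm hΩ hball hH (κ+1) (by omega)) le_rfl) (by omega))

end Fields


section Fields2
variable {n : ℕ} {k : ℕ} {Ω : Set (Fin n → ℝ)} {f : ((Fin n → ℝ) × ℝ × (Fin n → ℝ)) → ℝ}
    {H₁ : ((Fin n → ℝ) × ℝ) → ℝ} {x₀ : Fin n → ℝ} {R M : ℝ}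

lemma fderiv_eq_sum_pd (w : (Fin n → ℝ) → ℝ) (x v : Fin n → ℝ) :
    fderiv ℝ w x v = ∑ i, v i * pd i w x := by
  conv_lhs => rw [pi_eq_sum_univ' v]
  rw [map_sum]
  refine Finset.sum_congr rfl fun i _ => ?_
  rw [map_smul, smul_eq_mul, pd]

lemma fderiv_norm_le {w : (Fin n → ℝ) → ℝ} {x : Fin n → ℝ} {B : ℝ} (hB : 0 ≤ B)
    (h : ∀ i, |pd i w x| ≤ B) : ‖fderiv ℝ w x‖ ≤ n * B := by
  refine ContinuousLinearMap.opNorm_le_bound _ (by positivity) fun v => ?_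
  rw [fderiv_eq_sum_pd, Real.norm_eq_abs]
  refine (Finset.abs_sum_le_sum_abs _ _).trans ?_
  calc ∑ i, |v i * pd i w x| ≤ ∑ _i : Fin n, ‖v‖ * B := by
        refine Finset.sum_le_sum fun i _ => ?_
        rw [abs_mul]
        exact mul_le_mul (norm_le_pi_norm v i) (h i) (abs_nonneg _) (norm_nonneg _)
    _ = n * B * ‖v‖ := by simp; ring

lemma M_nonneg {u : (Fin n → ℝ) → ℝ} {C₁ : ℝ} (h : Adm k Ω f H₁ x₀ R M u C₁) (hR : 0 < R) :
    0 ≤ M := by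
  have h1 := h.hM x₀ (mem_ball_self (by linarith))
  have h2 : 0 ≤ vnorm (grad u x₀) := Real.sqrt_nonneg _
  have h3 := abs_nonneg (u x₀)
  linarith

lemma u_lip (hΩ : IsOpen Ω) (hball : closedBall x₀ (2 * R) ⊆ Ω) (hM : 0 ≤ M)
    {u : (Fin n → ℝ) → ℝ} {C₁ : ℝ} (h : Adm k Ω f H₁ x₀ R M u C₁) :
    LipschitzOnWith ((n : NNReal) * ⟨M, hM⟩) u (ball x₀ (2 * R)) := by
  refine (convex_ball x₀ (2 * R)).lipschitzOnWith_of_nnnorm_fderiv_le (𝕜 := ℝ)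
    (fun x hx => dAt hΩ h.hu (by norm_num) (hball (ball_subset_closedBall hx))) (fun x hx => ?_)
  rw [← NNReal.coe_le_coe]
  simp only [coe_nnnorm, NNReal.coe_mul, NNReal.coe_natCast, NNReal.coe_mk]
  refine fderiv_norm_le hM fun i => ?_
  have h1 := h.hM x hx
  have h2 := abs_le_vnorm (grad u x) i
  have h3 := abs_nonneg (u x)
  simp only [grad] at *
  linarith

lemma dH_lip (hΩ : IsOpen Ω) (hball : closedBall x₀ (2 * R) ⊆ Ω)
    (hH : C11On H₁ (Ω ×ˢ (univ : Set ℝ))) :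
    ∃ L : NNReal, LipschitzOnWith L (fderiv ℝ H₁) (closedBall x₀ (2 * R) ×ˢ Icc (-M) M) := by
  have hl : LocallyLipschitzOn (closedBall x₀ (2 * R) ×ˢ Icc (-M) M) (fderiv ℝ H₁) := by
    intro p hp
    have hpΩ := K_sub hball hp
    obtain ⟨K, t, ht, hL⟩ := hH.2 p hpΩ
    have ho : IsOpen (Ω ×ˢ (univ : Set ℝ)) := hΩ.prod isOpen_univ
    refine ⟨K, t ∩ (Ω ×ˢ univ), ?_, ?_⟩
    · exact nhdsWithin_mono _ (K_sub hball) (Filter.inter_mem ht self_mem_nhdsWithin)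
    · intro y hy z hz
      have := hL hy.1 hz.1
      rwa [fderivWithin_of_isOpen ho hy.2, fderivWithin_of_isOpen ho hz.2] at this
  exact hl.exists_lipschitzOnWith_of_compact K_compact

lemma b_lip (hΩ : IsOpen Ω) (hball : closedBall x₀ (2 * R) ⊆ Ω) (hM : 0 ≤ M)
    (hH : C11On H₁ (Ω ×ˢ (univ : Set ℝ))) (v : (Fin n → ℝ) × ℝ) (hv : ‖v‖ ≤ 1) :
    ∃ (L : NNReal) (L0 : ℝ), 0 ≤ L0 ∧ ∀ u C₁, Adm k Ω f H₁ x₀ R M u C₁ →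
      LipschitzOnWith L (fun x => fderiv ℝ H₁ (x, u x) v) (ball x₀ (2 * R)) ∧
      ∀ x ∈ ball x₀ (2 * R), |fderiv ℝ H₁ (x, u x) v| ≤ L0 := by
  obtain ⟨L, hL⟩ := dH_lip (M := M) hΩ hball hH
  obtain ⟨C, hC0, hC⟩ := dH_bound (M := M) hΩ hball hH.1
  refine ⟨L * max 1 ((n : NNReal) * ⟨M, hM⟩), C, hC0, fun u C₁ hA => ⟨?_, fun x hx =>
    (apply_le_norm _ _ hv).trans (hC _ (u_mem_Icc hA hx))⟩⟩
  have h1 : LipschitzOnWith (max 1 ((n : NNReal) * ⟨M, hM⟩)) (fun x => (x, u x)) (ball x₀ (2 * R)) :=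
    LipschitzWith.id.lipschitzOnWith.prodMk (u_lip hΩ hball hM hA)
  have h2 := hL.comp h1 (fun x hx => u_mem_Icc hA hx)
  refine LipschitzOnWith.of_dist_le_mul fun x hx y hy => ?_
  refine le_trans ?_ (h2.dist_le_mul x hx y hy)
  rw [Real.dist_eq, dist_eq_norm, ← ContinuousLinearMap.sub_apply]
  exact apply_le_norm _ _ hv


/-- the fields `c T_m ∇u`. -/
noncomputable def Fld (H₁ : ((Fin n → ℝ) × ℝ) → ℝ) (c : ((Fin n → ℝ) → ℝ) → (Fin n → ℝ) → ℝ)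
    (m : ℕ) (u : (Fin n → ℝ) → ℝ) (j : Fin n) (y : Fin n → ℝ) : ℝ :=
  c u y * ∑ l, newtonT m (Aug u (phi H₁ u) y) j l * pd l u y

/-- the fields `|∇u|² T_m e_i`. -/
noncomputable def Qld (H₁ : ((Fin n → ℝ) × ℝ) → ℝ) (m : ℕ) (i : Fin n)
    (u : (Fin n → ℝ) → ℝ) (j : Fin n) (y : Fin n → ℝ) : ℝ :=
  normSq (grad u y) * newtonT m (Aug u (phi H₁ u) y) j i

/-- the total field. -/
noncomputable def Xld (H₁ : ((Fin n → ℝ) × ℝ) → ℝ) (κ : ℕ)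
    (u : (Fin n → ℝ) → ℝ) (j : Fin n) (y : Fin n → ℝ) : ℝ :=
  Fld H₁ (fun u y => 2 * H₁ (y, u y)) (κ+1) u j y
    - Fld H₁ (fun u y => 2 * H₁ (y, u y) * phi H₁ u y) κ u j y
    - fderiv ℝ H₁ (y, u y) (0, 1) * Fld H₁ (fun u y => normSq (grad u y)) κ u j y
    - ∑ i, fderiv ℝ H₁ (y, u y) (Pi.single i 1, 0) * Qld H₁ κ i u j y

section
variable (hΩ : IsOpen Ω) (hball : closedBall x₀ (2 * R) ⊆ Ω)
    (hH : ContDiffOn ℝ 1 H₁ (Ω ×ˢ (univ : Set ℝ)))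
include hΩ hH

lemma Fld_contDiffOn (m : ℕ) {c : ((Fin n → ℝ) → ℝ) → (Fin n → ℝ) → ℝ} {u : (Fin n → ℝ) → ℝ}
    (hu : ContDiffOn ℝ 3 u Ω) (hc : ContDiffOn ℝ 1 (c u) Ω) (j : Fin n) :
    ContDiffOn ℝ 1 (Fld H₁ c m u j) Ω :=
  hc.mul (ContDiffOn.sum fun l _ => (newtonAug_contDiffOn hΩ hu (phi_contDiffOn hΩ hH hu) m j l).mul
    (pd_contDiffOn hΩ hu (a := 1) (by norm_num) l))

lemma Qld_contDiffOn (m : ℕ) {u : (Fin n → ℝ) → ℝ}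
    (hu : ContDiffOn ℝ 3 u Ω) (i j : Fin n) :
    ContDiffOn ℝ 1 (Qld H₁ m i u j) Ω :=
  ((normSq_contDiffOn hΩ hu).of_le (by norm_num)).mul
    (newtonAug_contDiffOn hΩ hu (phi_contDiffOn hΩ hH hu) m j i)

include hball

lemma dom_Fld (m N : ℕ) (hm : m ≤ n) (hN : m ≤ N) {c : ((Fin n → ℝ) → ℝ) → (Fin n → ℝ) → ℝ}
    (hc0 : Dom wt 0 (fun s : St k Ω f H₁ x₀ R M => c s.u s.x)) (j : Fin n) :
    Dom wt N (fun s : St k Ω f H₁ x₀ R M => Fld H₁ c m s.u j s.x) :=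
  hc0.mul one_le_wt (Dom.sum one_le_wt fun l => (dom_newton hΩ hball hH m hm j l).mul one_le_wt
    (dom_grad l) le_rfl) (by omega)

lemma dom_Qld (m N : ℕ) (hm : m ≤ n) (hN : m ≤ N) (i j : Fin n) :
    Dom wt N (fun s : St k Ω f H₁ x₀ R M => Qld H₁ m i s.u j s.x) :=
  dom_normSq.mul one_le_wt (dom_newton hΩ hball hH m hm j i) (by omega)

lemma dom_divQ (m N : ℕ) (hm : m ≤ n) (hN : m + 1 ≤ N) (i : Fin n) :
    Dom wt N (fun s : St k Ω f H₁ x₀ R M => ∑ j, pd j (Qld H₁ m i s.u j) s.x) := by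
  have key : ∀ s : St k Ω f H₁ x₀ R M, ∑ j, pd j (Qld H₁ m i s.u j) s.x
      = ∑ j, pd j (fun y => normSq (grad s.u y)) s.x * newtonT m (Aug s.u (phi H₁ s.u) s.x) j i
        + normSq (grad s.u s.x) *
          ∑ j, pd j (fun y => newtonT m (Aug s.u (phi H₁ s.u) y) j i) s.x := by
    intro s
    have hx := s.memΩ hball
    rw [Finset.mul_sum, ← Finset.sum_add_distrib]
    refine Finset.sum_congr rfl fun j _ => ?_
    exact pd_mul (dAt hΩ (normSq_contDiffOn hΩ s.adm.hu) (by norm_num) hx)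
      (dAt hΩ (newtonAug_contDiffOn hΩ s.adm.hu (phi_contDiffOn hΩ hH s.adm.hu) m j i) le_rfl hx)
  simp only [key]
  exact (Dom.sum one_le_wt fun j => (dom_pd_normSq hΩ hball hH j).mul one_le_wt
    (dom_newton hΩ hball hH m hm j i) (by omega)).add one_le_wt
    (dom_normSq.mul one_le_wt (dom_divT hΩ hball hH m hm i) (by omega))

end

lemma integral_sub4 {μ : Measure (Fin n → ℝ)} {A B C D : (Fin n → ℝ) → ℝ} (hA : Integrable A μ)
    (hB : Integrable B μ) (hC : Integrable C μ) (hD : Integrable D μ) :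
    ∫ x, (A x - B x - C x - D x) ∂μ = ∫ x, A x ∂μ - ∫ x, B x ∂μ - ∫ x, C x ∂μ - ∫ x, D x ∂μ := by
  have h1 : Integrable (fun x => A x - B x) μ := hA.sub hB
  have h2 : Integrable (fun x => A x - B x - C x) μ := h1.sub hC
  rw [integral_sub h2 hD, integral_sub h1 hC, integral_sub hA hB]

lemma est_X (hΩ : IsOpen Ω) (hball : closedBall x₀ (2 * R) ⊆ Ω) (hR : 0 < R)
    {c₀ : ℝ} (hc₀ : 0 < c₀) (hM : 0 ≤ M)
    (hf : ContinuousOn f (Ω ×ˢ ((univ : Set ℝ) ×ˢ (univ : Set (Fin n → ℝ)))))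
    (hH : C11On H₁ (Ω ×ˢ (univ : Set ℝ))) (κ : ℕ) (hκ : κ + 2 ≤ n) :
    ∃ C : ℝ, 0 ≤ C ∧ ∀ u C₁, Adm (κ+2) Ω f H₁ x₀ R M u C₁ → ∀ ρ : ℝ, 0 < ρ → ρ ≤ R / 3 →
      ∀ η : (Fin n → ℝ) → ℝ, ContDiff ℝ 1 η → (∀ x, x ∉ ball x₀ (R + 2 * ρ) → η x = 0) →
      (∀ x, 0 ≤ η x ∧ η x ≤ 1) → (∀ x, vnorm (grad η x) ≤ c₀ / ρ) →
      ∀ (O : Set (Fin n → ℝ)) (V : (Fin n → ℝ) → ℝ), IsOpen O → closedBall x₀ (R + 2 * ρ) ⊆ O →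
      O ⊆ ball x₀ (2 * R) → ContDiffOn ℝ 1 V O →
      |∫ x in ball x₀ (R + 2 * ρ), η x * ∑ j, Xld H₁ κ u j x * pd j V x|
        ≤ C / ρ * ∫ x in ball x₀ (R + 2 * ρ), |V x| * (lapl u x + C₁) ^ (κ+1) := by
  have hH1 := hH.1
  have ha := fun {u} => a_contDiffOn hH1 (u := u)
  have hφ := fun {u} => phi_contDiffOn hΩ hH1 (u := u)
  have hg := fun {u} (hu : ContDiffOn ℝ 3 u Ω) =>
    (normSq_contDiffOn hΩ hu).of_le (m := 1) (by norm_num)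
  have c2 : ∀ u, ContDiffOn ℝ 3 u Ω → ContDiffOn ℝ 1 (fun y => 2 * H₁ (y, u y)) Ω :=
    fun u hu => contDiffOn_const.mul (ha hu)
  have c3 : ∀ u, ContDiffOn ℝ 3 u Ω → ContDiffOn ℝ 1 (fun y => 2 * H₁ (y, u y) * phi H₁ u y) Ω :=
    fun u hu => (c2 u hu).mul (hφ hu)
  have one : ∃ (L : NNReal) (L0 : ℝ), 0 ≤ L0 ∧ ∀ u C₁, Adm (κ+2) Ω f H₁ x₀ R M u C₁ →
      LipschitzOnWith L ((fun _ _ => 1 : ((Fin n → ℝ) → ℝ) → (Fin n → ℝ) → ℝ) u) (ball x₀ (2 * R))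
      ∧ ∀ x ∈ ball x₀ (2 * R),
        |(fun _ _ => 1 : ((Fin n → ℝ) → ℝ) → (Fin n → ℝ) → ℝ) u x| ≤ L0 :=
    ⟨0, 1, zero_le_one, fun u C₁ _ => ⟨(LipschitzWith.const (1:ℝ)).lipschitzOnWith, by simp⟩⟩
  have d2 : Dom wt 0 (fun s : St (κ+2) Ω f H₁ x₀ R M => 2 * H₁ (s.x, s.u s.x)) :=
    (Dom.const one_le_wt 0 2).mul one_le_wt (dom_a hball hH1) le_rfl
  have d2' : ∀ j, Dom wt 0 (fun s : St (κ+2) Ω f H₁ x₀ R M =>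
      pd j (fun y => 2 * H₁ (y, s.u y)) s.x) := by
    intro j
    simp only [fun s : St (κ+2) Ω f H₁ x₀ R M =>
      pd_const_mul (i := j) (c := 2) (dAt hΩ (ha s.adm.hu) le_rfl (s.memΩ hball))]
    exact (Dom.const one_le_wt 0 2).mul one_le_wt (dom_pd_a hΩ hball hH1 j) le_rfl
  have d3 : Dom wt 0 (fun s : St (κ+2) Ω f H₁ x₀ R M =>
      2 * H₁ (s.x, s.u s.x) * phi H₁ s.u s.x) := d2.mul one_le_wt (dom_phi hΩ hball hH1) le_rfl
  have d3' : ∀ j, Dom wt 1 (fun s : St (κ+2) Ω f H₁ x₀ R M =>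
      pd j (fun y => 2 * H₁ (y, s.u y) * phi H₁ s.u y) s.x) := by
    intro j
    simp only [fun s : St (κ+2) Ω f H₁ x₀ R M =>
      pd_mul (i := j) (dAt hΩ (c2 s.u s.adm.hu) le_rfl (s.memΩ hball))
        (dAt hΩ (hφ s.adm.hu) le_rfl (s.memΩ hball))]
    exact ((d2' j).mul one_le_wt (dom_phi hΩ hball hH1) (by omega)).add one_le_wt
      (d2.mul one_le_wt (dom_pd_phi hΩ hball hH1 j) (by omega))
  have t0 := dom_Thess0 (k := κ+2) (f := f) (M := M) hΩ hball hH1 κ (by omega)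
  obtain ⟨C1, hC1, E1⟩ := est_field (k := κ+2) (f := f) (H₁ := H₁) (M := M) hΩ hball hR hc₀ (κ+1)
    (Fld H₁ (fun u y => 2 * H₁ (y, u y)) (κ+1)) (fun _ _ => 1)
    (fun u hu j => Fld_contDiffOn hΩ hH1 _ hu (c2 u hu) j)
    (dom_Fld hΩ hball hH1 _ _ (by omega) le_rfl d2)
    (dom_divF hΩ hball hH1 (κ+1) 0 (κ+1) (by omega) (fun s y => 2 * H₁ (y, s.u y))
      (fun s => c2 _ s.adm.hu) d2 d2' (by omega) (dom_Thess1 hΩ hball hH1 hf κ hκ)) one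
  obtain ⟨C2, hC2, E2⟩ := est_field (k := κ+2) (f := f) (H₁ := H₁) (M := M) hΩ hball hR hc₀ (κ+1)
    (Fld H₁ (fun u y => 2 * H₁ (y, u y) * phi H₁ u y) κ) (fun _ _ => 1)
    (fun u hu j => Fld_contDiffOn hΩ hH1 _ hu (c3 u hu) j)
    (dom_Fld hΩ hball hH1 _ _ (by omega) (by omega) d3)
    (dom_divF hΩ hball hH1 κ 1 (κ+1) (by omega) (fun s y => 2 * H₁ (y, s.u y) * phi H₁ s.u y)
      (fun s => c3 _ s.adm.hu) d3 d3' (by omega) t0) one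
  obtain ⟨C3, hC3, E3⟩ := est_field (k := κ+2) (f := f) (H₁ := H₁) (M := M) hΩ hball hR hc₀ (κ+1)
    (Fld H₁ (fun u y => normSq (grad u y)) κ) (fun u x => fderiv ℝ H₁ (x, u x) (0, 1))
    (fun u hu j => Fld_contDiffOn hΩ hH1 _ hu (hg hu) j)
    (dom_Fld hΩ hball hH1 _ _ (by omega) (by omega) dom_normSq)
    (dom_divF hΩ hball hH1 κ 1 (κ+1) (by omega) (fun s y => normSq (grad s.u y))
      (fun s => hg s.adm.hu) dom_normSq (dom_pd_normSq hΩ hball hH1) (by omega) t0)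
    (b_lip hΩ hball hM hH _ norm_e0)
  have EQ := fun i => est_field (k := κ+2) (f := f) (H₁ := H₁) (M := M) hΩ hball hR hc₀ (κ+1)
    (Qld H₁ κ i) (fun u x => fderiv ℝ H₁ (x, u x) (Pi.single i 1, 0))
    (fun u hu j => Qld_contDiffOn hΩ hH1 _ hu i j)
    (dom_Qld hΩ hball hH1 _ _ (by omega) (by omega) i)
    (dom_divQ hΩ hball hH1 κ (κ+1) (by omega) le_rfl i)
    (b_lip hΩ hball hM hH _ (norm_e i))
  choose C4 hC4 E4 using EQ
  refine ⟨C1 + C2 + C3 + ∑ i, C4 i,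
    add_nonneg (by positivity) (Finset.sum_nonneg fun i _ => hC4 i), ?_⟩
  intro u C₁ hA ρ hρ hρR η hη hη0 hη1 hη2 O V hO hOr hO2 hV
  have E1 := E1 u C₁ hA ρ hρ hρR η hη hη0 hη1 hη2 O V hO hOr hO2 hV
  have E2 := E2 u C₁ hA ρ hρ hρR η hη hη0 hη1 hη2 O V hO hOr hO2 hV
  have E3 := E3 u C₁ hA ρ hρ hρR η hη hη0 hη1 hη2 O V hO hOr hO2 hV
  have E4 := fun i => E4 i u C₁ hA ρ hρ hρR η hη hη0 hη1 hη2 O V hO hOr hO2 hV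
  have hO3 : O ⊆ Ω := hO2.trans (ball_subset_closedBall.trans hball)
  have hsub : closedBall x₀ (R + 2 * ρ) ⊆ Ω := hOr.trans hO3
  have bc : ∀ v, ContinuousOn (fun x => fderiv ℝ H₁ (x, u x) v) (closedBall x₀ (R + 2 * ρ)) := by
    intro v
    have h := (hH1.fderiv_of_isOpen (hΩ.prod isOpen_univ) (m := 0) (by norm_num)).continuousOn
    have h2 : ContinuousOn (fun x => fderiv ℝ H₁ (x, u x)) (closedBall x₀ (R + 2 * ρ)) :=
      h.comp (continuousOn_id.prodMk (hA.hu.continuousOn.mono hsub))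
        (fun y hy => ⟨hsub hy, mem_univ _⟩)
    exact h2.clm_apply continuousOn_const
  have int : ∀ (b : (Fin n → ℝ) → ℝ) (Z : Fin n → (Fin n → ℝ) → ℝ),
      ContinuousOn b (closedBall x₀ (R + 2 * ρ)) → (∀ j, ContDiffOn ℝ 1 (Z j) Ω) →
      IntegrableOn (fun x => b x * (η x * ∑ j, Z j x * pd j V x)) (ball x₀ (R + 2 * ρ)) := by
    intro b Z hb hZ
    refine contOn_int (hb.fun_mul (hη.continuous.continuousOn.fun_mul
      (continuousOn_finsetSum _ fun j _ => ((hZ j).continuousOn.mono hsub).fun_mul ?_)))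
    exact ((pd_contDiffOn hO hV (a := 0) (by norm_num) j).continuousOn).mono hOr
  have I1 := int (fun _ => 1) _ continuousOn_const
    (fun j => Fld_contDiffOn (H₁ := H₁) (c := fun u y => 2 * H₁ (y, u y)) hΩ hH1 (κ+1) hA.hu (c2 u hA.hu) j)
  have I2 := int (fun _ => 1) _ continuousOn_const
    (fun j => Fld_contDiffOn (H₁ := H₁) (c := fun u y => 2 * H₁ (y, u y) * phi H₁ u y) hΩ hH1 κ hA.hu (c3 u hA.hu) j)
  have I3 := int _ _ (bc (0, 1))
    (fun j => Fld_contDiffOn (H₁ := H₁) (c := fun u y => normSq (grad u y))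
      hΩ hH1 κ hA.hu (hg hA.hu) j)
  have I4 := fun i => int _ _ (bc (Pi.single i 1, 0)) (fun j => Qld_contDiffOn hΩ hH1 κ hA.hu i j)
  have split : ∀ x, η x * ∑ j, Xld H₁ κ u j x * pd j V x
      = 1 * (η x * ∑ j, Fld H₁ (fun u y => 2 * H₁ (y, u y)) (κ+1) u j x * pd j V x)
        - 1 * (η x * ∑ j, Fld H₁ (fun u y => 2 * H₁ (y, u y) * phi H₁ u y) κ u j x * pd j V x)
        - fderiv ℝ H₁ (x, u x) (0, 1) *
          (η x * ∑ j, Fld H₁ (fun u y => normSq (grad u y)) κ u j x * pd j V x)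
        - ∑ i, fderiv ℝ H₁ (x, u x) (Pi.single i 1, 0) *
          (η x * ∑ j, Qld H₁ κ i u j x * pd j V x) := by
    intro x
    simp only [Xld, sub_mul, Finset.sum_sub_distrib, Finset.sum_mul, Finset.mul_sum, mul_sub]
    rw [Finset.sum_comm (s := Finset.univ (α := Fin n)) (f := fun i j =>
      η x * (fderiv ℝ H₁ (x, u x) (Pi.single j 1, 0) * Qld H₁ κ j u i x * pd i V x))]
    congr 1
    · congr 1
      · congr 1 <;> exact Finset.sum_congr rfl fun j _ => by ring
      · exact Finset.sum_congr rfl fun j _ => by ring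
    · exact Finset.sum_congr rfl fun j _ => Finset.sum_congr rfl fun j _ => by ring
  simp only [split]
  rw [integral_sub4 I1 I2 I3 (integrable_finsetSum _ fun i _ => I4 i),
    integral_finsetSum _ fun i _ => I4 i]
  set J := ∫ x in ball x₀ (R + 2 * ρ), |V x| * (lapl u x + C₁) ^ (κ+1)
  have E5 : |∑ i, ∫ x in ball x₀ (R + 2 * ρ), fderiv ℝ H₁ (x, u x) (Pi.single i 1, 0) *
          (η x * ∑ j, Qld H₁ κ i u j x * pd j V x)| ≤ (∑ i, C4 i) / ρ * J := by
    refine (Finset.abs_sum_le_sum_abs _ _).trans ?_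
    rw [Finset.sum_div, Finset.sum_mul]
    exact Finset.sum_le_sum fun i _ => E4 i
  refine (abs_sub _ _).trans ((add_le_add ((abs_sub _ _).trans (add_le_add ((abs_sub _ _).trans
    (add_le_add E1 E2)) E3)) E5).trans (le_of_eq (by ring)))

end Fields2


section SecondDiff
variable {n : ℕ} {k : ℕ} {Ω : Set (Fin n → ℝ)} {f : ((Fin n → ℝ) × ℝ × (Fin n → ℝ)) → ℝ}
    {H₁ : ((Fin n → ℝ) × ℝ) → ℝ} {x₀ : Fin n → ℝ} {R M : ℝ}

lemma line_diff {U U' w : ℝ → ℝ} {κ : ℝ} (hκ : 0 ≤ κ) (hw : Continuous w)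
    (hw0 : ∀ s ∈ Icc (-1:ℝ) 1, 0 ≤ w s)
    (hU : ∀ s ∈ Icc (-1:ℝ) 1, HasDerivAt U (U' s) s) (hU' : ContinuousOn U' (Icc (-1) 1))
    (hb : ∀ s ∈ Icc (-1:ℝ) 1, |U' s| ≤ κ * w s) :
    ∀ s ∈ Icc (-1:ℝ) 1, ∀ t ∈ Icc (-1:ℝ) 1, |U t - U s| ≤ κ * ∫ r in (-1:ℝ)..1, w r := by
  have key : ∀ s ∈ Icc (-1:ℝ) 1, ∀ t ∈ Icc (-1:ℝ) 1, s ≤ t →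
      |U t - U s| ≤ κ * ∫ r in (-1:ℝ)..1, w r := by
    intro s hs t ht hst
    have hsub : Icc s t ⊆ Icc (-1:ℝ) 1 := Icc_subset_Icc hs.1 ht.2
    rw [← intervalIntegral.integral_eq_sub_of_hasDerivAt (f := U) (f' := U')
      (fun r hr => hU r (hsub (by rwa [uIcc_of_le hst] at hr)))
      ((hU'.mono (by rw [uIcc_of_le hst]; exact hsub)).intervalIntegrable)]
    refine (intervalIntegral.abs_integral_le_integral_abs hst).trans ?_
    have h1 : ∫ r in s..t, |U' r| ≤ ∫ r in s..t, κ * w r := by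
      refine intervalIntegral.integral_mono_on hst ?_ ?_ (fun r hr => hb r (hsub hr))
      · exact ((hU'.mono (by rw [uIcc_of_le hst]; exact hsub)).abs).intervalIntegrable
      · exact (continuous_const.mul hw).intervalIntegrable _ _
    refine h1.trans ?_
    rw [intervalIntegral.integral_const_mul]
    refine mul_le_mul_of_nonneg_left ?_ hκ
    refine intervalIntegral.integral_mono_interval hs.1 hst ht.2 ?_ (hw.intervalIntegrable _ _)
    refine (ae_restrict_iff' measurableSet_Ioc).2 (Filter.Eventually.of_forall fun r hr => ?_)
    exact hw0 r ⟨hr.1.le, hr.2⟩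
  intro s hs t ht
  rcases le_total s t with h | h
  · exact key s hs t ht h
  · rw [abs_sub_comm]; exact key t ht s hs h

lemma alg_diff {a0 ap am h J B : ℝ} {U0 Up Um : Fin n → ℝ} (hh : h ≠ 0) (hJ : 1 ≤ J) (hB : 0 ≤ B)
    (hM : 0 ≤ M) (ha0 : 0 ≤ a0) (hap : |ap - a0| ≤ B * |h|) (ham : |am - a0| ≤ B * |h|)
    (ha2 : |ap + am - 2 * a0| ≤ B * J * h ^ 2)
    (hU0 : ∀ i, |U0 i| ≤ M) (hUp : ∀ i, |Up i| ≤ M) (hUm : ∀ i, |Um i| ≤ M)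
    (hdp : ∀ i, |Up i - U0 i| ≤ |h| * J) (hdm : ∀ i, |Um i - U0 i| ≤ |h| * J) :
    -((4 * n * M * B + n * M ^ 2 * B) * J) ≤
      (ap * normSq Up - 2 * (a0 * normSq U0) + am * normSq Um) / h ^ 2
        - 2 * a0 * ∑ i, U0 i * ((Up i - 2 * U0 i + Um i) / h ^ 2) := by
  have hh2 : 0 < h ^ 2 := by positivity
  have habs : |h| * |h| = h ^ 2 := by rw [← sq, sq_abs]
  have gd : ∀ V : Fin n → ℝ, (∀ i, |V i| ≤ M) → (∀ i, |V i - U0 i| ≤ |h| * J) →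
      |normSq V - normSq U0| ≤ n * (2 * M * (|h| * J)) := by
    intro V hV hd
    unfold normSq
    rw [← Finset.sum_sub_distrib]
    refine (Finset.abs_sum_le_sum_abs _ _).trans ?_
    calc ∑ i, |V i ^ 2 - U0 i ^ 2| ≤ ∑ _i : Fin n, 2 * M * (|h| * J) := by
          refine Finset.sum_le_sum fun i _ => ?_
          rw [sq_sub_sq, abs_mul]
          refine mul_le_mul ?_ (hd i) (abs_nonneg _) (by positivity)
          refine (abs_add_le _ _).trans ?_
          linarith [hV i, hU0 i]
      _ = _ := by simp
  have g0 : |normSq U0| ≤ n * M ^ 2 := by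
    unfold normSq
    refine (Finset.abs_sum_le_sum_abs _ _).trans ?_
    calc ∑ i, |U0 i ^ 2| ≤ ∑ _i : Fin n, M ^ 2 := by
          refine Finset.sum_le_sum fun i _ => ?_
          rw [abs_pow]
          exact pow_le_pow_left₀ (abs_nonneg _) (hU0 i) 2
      _ = _ := by simp
  have e1 : |(ap - a0) * (normSq Up - normSq U0)| ≤ 2 * n * M * B * J * h ^ 2 := by
    rw [abs_mul]
    refine (mul_le_mul hap (gd Up hUp hdp) (abs_nonneg _) (by positivity)).trans (le_of_eq ?_)
    rw [← habs]; ring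
  have e2 : |(am - a0) * (normSq Um - normSq U0)| ≤ 2 * n * M * B * J * h ^ 2 := by
    rw [abs_mul]
    refine (mul_le_mul ham (gd Um hUm hdm) (abs_nonneg _) (by positivity)).trans (le_of_eq ?_)
    rw [← habs]; ring
  have e3 : |normSq U0 * (ap + am - 2 * a0)| ≤ n * M ^ 2 * B * J * h ^ 2 := by
    rw [abs_mul]
    refine (mul_le_mul g0 ha2 (abs_nonneg _) (by positivity)).trans (le_of_eq ?_)
    ring
  have e4 : normSq Up - 2 * normSq U0 + normSq Um
      - 2 * ∑ i, U0 i * (Up i - 2 * U0 i + Um i)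
      = ∑ i, ((Up i - U0 i) ^ 2 + (Um i - U0 i) ^ 2) := by
    unfold normSq
    rw [Finset.mul_sum, Finset.mul_sum, ← Finset.sum_sub_distrib, ← Finset.sum_add_distrib,
      ← Finset.sum_sub_distrib]
    exact Finset.sum_congr rfl fun i _ => by ring
  have e5 : 0 ≤ ∑ i, ((Up i - U0 i) ^ 2 + (Um i - U0 i) ^ 2) :=
    Finset.sum_nonneg fun i _ => by positivity
  have e6 : ∑ i, U0 i * ((Up i - 2 * U0 i + Um i) / h ^ 2)
      = (∑ i, U0 i * (Up i - 2 * U0 i + Um i)) / h ^ 2 := by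
    rw [Finset.sum_div]; exact Finset.sum_congr rfl fun i _ => by ring
  rw [e6]
  set T := ∑ i, U0 i * (Up i - 2 * U0 i + Um i)
  have e7 : (ap * normSq Up - 2 * (a0 * normSq U0) + am * normSq Um) / h ^ 2
        - 2 * a0 * (T / h ^ 2)
      = (a0 * (normSq Up - 2 * normSq U0 + normSq Um - 2 * T)
        + (ap - a0) * (normSq Up - normSq U0) + (am - a0) * (normSq Um - normSq U0)
        + normSq U0 * (ap + am - 2 * a0)) / h ^ 2 := by
    field_simp; ring
  rw [e7, e4, le_div_iff₀ hh2]
  have e8 := mul_nonneg ha0 e5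
  have f1 := (abs_le.1 e1).1
  have f2 := (abs_le.1 e2).1
  have f3 := (abs_le.1 e3).1
  nlinarith

lemma hasDerivAt_line {w : (Fin n → ℝ) → ℝ} {x : Fin n → ℝ} {l : Fin n} {h s : ℝ}
    (hw : DifferentiableAt ℝ w (x + (s * h) • (Pi.single l 1 : Fin n → ℝ))) :
    HasDerivAt (fun s : ℝ => w (x + (s * h) • (Pi.single l 1 : Fin n → ℝ)))
      (h * pd l w (x + (s * h) • (Pi.single l 1 : Fin n → ℝ))) s := by
  have h1 : HasDerivAt (fun s : ℝ => x + (s * h) • (Pi.single l 1 : Fin n → ℝ))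
      (h • (Pi.single l 1 : Fin n → ℝ)) s := by
    have := (((hasDerivAt_id s).mul_const h).smul_const (Pi.single l 1 : Fin n → ℝ)).const_add x
    simpa using this
  have h2 := hw.hasFDerivAt.comp_hasDerivAt s h1
  rw [map_smul, smul_eq_mul] at h2
  exact h2

lemma ddq_bound (hΩ : IsOpen Ω) (hball : closedBall x₀ (2 * R) ⊆ Ω) (hR : 0 < R) (hM : 0 ≤ M)
    (hH : C11On H₁ (Ω ×ˢ (univ : Set ℝ))) (hH0 : ∀ y ∈ Ω ×ˢ (univ : Set ℝ), 0 ≤ H₁ y) :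
    ∃ C : ℝ, 0 ≤ C ∧ ∀ u C₁, Adm k Ω f H₁ x₀ R M u C₁ → ∀ W : (Fin n → ℝ) → ℝ, Continuous W →
      (∀ y ∈ ball x₀ (2 * R), W y = lapl u y + C₁) → ∀ (l : Fin n) (h : ℝ) (x : Fin n → ℝ), h ≠ 0 →
      (∀ s ∈ Icc (-1:ℝ) 1, x + (s * h) • (Pi.single l 1 : Fin n → ℝ) ∈ ball x₀ (2 * R)) →
      -(C * ∫ s in (-1:ℝ)..1, W (x + (s * h) • (Pi.single l 1 : Fin n → ℝ))) ≤
        ddq l h (phi H₁ u) x - 2 * H₁ (x, u x) * ∑ i, pd i u x * ddq l h (pd i u) x := by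
  have hb := fun l : Fin n => b_lip (k := k) (f := f) hΩ hball hM hH (Pi.single l 1, 0) (norm_e l)
  choose L1 B1 hB1 hb using hb
  obtain ⟨L2, B2, hB2, hb0⟩ := b_lip (k := k) (f := f) hΩ hball hM hH (0, 1) norm_e0
  set B : ℝ := ∑ l, ((B1 l + B2 * M) + (2 * L1 l + 2 * L2 * M + B2)) with hBdef
  have hnn : ∀ l : Fin n, 0 ≤ (B1 l + B2 * M) + (2 * L1 l + 2 * L2 * M + B2) := fun l => by
    have := hB1 l; positivity
  have hB0 : 0 ≤ B := Finset.sum_nonneg fun l _ => hnn l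
  refine ⟨4 * n * M * B + n * M ^ 2 * B, by positivity, ?_⟩
  intro u C₁ hA W hW hWw l h x hh hseg
  have hBl : (B1 l + B2 * M) + (2 * L1 l + 2 * L2 * M + B2) ≤ B :=
    Finset.single_le_sum (f := fun l => (B1 l + B2 * M) + (2 * L1 l + 2 * L2 * M + B2))
      (fun l _ => hnn l) (Finset.mem_univ l)
  set y : ℝ → (Fin n → ℝ) := fun s => x + (s * h) • (Pi.single l 1 : Fin n → ℝ) with hy
  have hyc : Continuous y := by fun_prop
  have hyΩ : ∀ s ∈ Icc (-1:ℝ) 1, y s ∈ Ω := fun s hs => hball (ball_subset_closedBall (hseg s hs))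
  have hWc : Continuous (fun s => W (y s)) := hW.comp hyc
  have hW1 : ∀ s ∈ Icc (-1:ℝ) 1, 1 ≤ W (y s) := fun s hs => by
    rw [hWw _ (hseg s hs)]; exact (hA.h1 _ (hseg s hs)).1
  set J := ∫ s in (-1:ℝ)..1, W (y s) with hJ
  have hJ1 : 1 ≤ J := by
    have : ∫ s in (-1:ℝ)..1, (1:ℝ) ≤ J :=
      intervalIntegral.integral_mono_on (by norm_num) (by simp) (hWc.intervalIntegrable _ _) hW1
    simp at this; linarith
  have hg : ∀ s ∈ Icc (-1:ℝ) 1, ∀ i, |pd i u (y s)| ≤ M := by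
    intro s hs i
    have h1 := hA.hM _ (hseg s hs)
    have h2 := abs_le_vnorm (grad u (y s)) i
    have h3 := abs_nonneg (u (y s))
    simp only [grad] at *
    linarith
  have m0 : (0:ℝ) ∈ Icc (-1:ℝ) 1 := by norm_num
  have m1 : (1:ℝ) ∈ Icc (-1:ℝ) 1 := by norm_num
  have mm : (-1:ℝ) ∈ Icc (-1:ℝ) 1 := by norm_num
  have y0 : y 0 = x := by simp [hy]
  have y1 : y 1 = x + h • (Pi.single l 1 : Fin n → ℝ) := by simp [hy]
  have ym : y (-1) = x - h • (Pi.single l 1 : Fin n → ℝ) := by simp [hy, sub_eq_add_neg]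
  have hu1 : ∀ i, ContDiffOn ℝ 2 (pd i u) Ω := fun i =>
    pd_contDiffOn hΩ hA.hu (by norm_num) i
  -- differences of gradient
  have hd : ∀ i, ∀ s ∈ Icc (-1:ℝ) 1, ∀ t ∈ Icc (-1:ℝ) 1,
      |pd i u (y t) - pd i u (y s)| ≤ |h| * J := by
    intro i
    refine line_diff (U := fun s => pd i u (y s)) (U' := fun s => h * pd l (pd i u) (y s))
      (abs_nonneg h) hWc (fun s hs => by linarith [hW1 s hs])
      (fun s hs => hasDerivAt_line (dAt hΩ (hu1 i) (by norm_num) (hyΩ s hs))) ?_ ?_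
    · exact continuousOn_const.mul (((pd_contDiffOn hΩ (hu1 i) (a := 1)
        (by norm_num) l).continuousOn).comp hyc.continuousOn hyΩ)
    · intro s hs
      rw [abs_mul, hWw _ (hseg s hs)]
      exact mul_le_mul_of_nonneg_left ((abs_le_matNorm (hess u (y s)) l i).trans
        (hA.h1 _ (hseg s hs)).2) (abs_nonneg h)
  -- the coefficient along the line
  set a : ℝ → ℝ := fun s => H₁ (y s, u (y s)) with ha
  set a' : ℝ → ℝ := fun s => pd l (fun y => H₁ (y, u y)) (y s) with ha'
  have hda : ∀ s ∈ Icc (-1:ℝ) 1, HasDerivAt a (h * a' s) s := fun s hs =>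
    hasDerivAt_line (w := fun y => H₁ (y, u y)) (dAt hΩ (a_contDiffOn hH.1 hA.hu) le_rfl (hyΩ s hs))
  have hpa : ∀ s ∈ Icc (-1:ℝ) 1, a' s = fderiv ℝ H₁ (y s, u (y s)) (Pi.single l 1, 0)
      + fderiv ℝ H₁ (y s, u (y s)) (0, 1) * pd l u (y s) := fun s hs =>
    pd_a hΩ hH.1 hA.hu (hyΩ s hs) l
  have ha'b : ∀ s ∈ Icc (-1:ℝ) 1, |a' s| ≤ B := by
    intro s hs
    rw [hpa s hs]
    have q1 := (hb l u C₁ hA).2 _ (hseg s hs)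
    have q2 := (hb0 u C₁ hA).2 _ (hseg s hs)
    have q3 := mul_le_mul q2 (hg s hs l) (abs_nonneg _) hB2
    rw [← abs_mul] at q3
    have q4 : 0 ≤ 2 * (L1 l : ℝ) + 2 * L2 * M + B2 := by positivity
    exact (abs_add_le _ _).trans (by linarith)
  have hab : ∀ s ∈ Icc (-1:ℝ) 1, |a s - a 0| ≤ B * |h| := by
    intro s hs
    have := (convex_Icc (-1:ℝ) 1).norm_image_sub_le_of_norm_hasDerivWithin_le (f := a)
      (C := B * |h|) (fun s hs => (hda s hs).hasDerivWithinAt) (fun s hs => by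
        rw [norm_mul, mul_comm]; exact mul_le_mul_of_nonneg_right (ha'b s hs) (abs_nonneg h)) m0 hs
    rw [Real.norm_eq_abs, Real.norm_eq_abs, sub_zero] at this
    have h1 : |s| ≤ 1 := abs_le.2 hs
    exact this.trans (mul_le_of_le_one_right (by positivity) h1)
  have hneg : ∀ s ∈ Icc (0:ℝ) 1, s ∈ Icc (-1:ℝ) 1 ∧ -s ∈ Icc (-1:ℝ) 1 := fun s hs =>
    ⟨⟨by linarith [hs.1], hs.2⟩, ⟨by linarith [hs.2], by linarith [hs.1]⟩⟩
  have ha2 : ∀ s ∈ Icc (0:ℝ) 1, |a' s - a' (-s)| ≤ B * J * |h| := by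
    intro s hs
    obtain ⟨hs1, hs2⟩ := hneg s hs
    have hdist : dist (y s) (y (-s)) ≤ 2 * |h| := by
      have : y s - y (-s) = (2 * s * h) • (Pi.single l 1 : Fin n → ℝ) := by
        simp only [hy]
        rw [add_sub_add_left_eq_sub, ← sub_smul]; congr 1; ring
      rw [dist_eq_norm, this, norm_smul, Pi.norm_single, norm_one, mul_one, Real.norm_eq_abs,
        abs_mul, abs_mul, abs_two, abs_of_nonneg hs.1]
      have := abs_nonneg h
      nlinarith [hs.2]
    have q1 := (hb l u C₁ hA).1.dist_le_mul _ (hseg s hs1) _ (hseg _ hs2)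
    have q2 := (hb0 u C₁ hA).1.dist_le_mul _ (hseg s hs1) _ (hseg _ hs2)
    rw [Real.dist_eq] at q1 q2
    replace q1 := q1.trans (mul_le_mul_of_nonneg_left hdist (L1 l).2)
    replace q2 := q2.trans (mul_le_mul_of_nonneg_left hdist L2.2)
    have q3 := (hb0 u C₁ hA).2 _ (hseg _ hs2)
    have q4 := hd l _ hs2 _ hs1
    have q5 := hg s hs1 l
    rw [hpa s hs1, hpa _ hs2]
    set p1 := fderiv ℝ H₁ (y s, u (y s)) (Pi.single l 1, 0)
    set p2 := fderiv ℝ H₁ (y (-s), u (y (-s))) (Pi.single l 1, 0)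
    set r1 := fderiv ℝ H₁ (y s, u (y s)) (0, 1)
    set r2 := fderiv ℝ H₁ (y (-s), u (y (-s))) (0, 1)
    have e : p1 + r1 * pd l u (y s) - (p2 + r2 * pd l u (y (-s)))
        = (p1 - p2) + (r1 - r2) * pd l u (y s) + r2 * (pd l u (y s) - pd l u (y (-s))) := by ring
    rw [e]
    refine (abs_add_le _ _).trans ((add_le_add (abs_add_le _ _) le_rfl).trans ?_)
    rw [abs_mul, abs_mul]
    have t1 := mul_le_mul q2 q5 (abs_nonneg _) (by positivity)
    have t2 := mul_le_mul q3 q4 (abs_nonneg _) hB2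
    have hL1 : (0:ℝ) ≤ L1 l := (L1 l).2
    have hL2 : (0:ℝ) ≤ L2 := L2.2
    have hB1l := hB1 l
    calc _ ≤ (L1 l : ℝ) * (2 * |h|) + L2 * (2 * |h|) * M + B2 * (|h| * J) :=
          add_le_add (add_le_add q1 t1) t2
      _ = (2 * L1 l + 2 * L2 * M) * |h| * 1 + B2 * |h| * J := by ring
      _ ≤ (2 * L1 l + 2 * L2 * M) * |h| * J + B2 * |h| * J := by gcongr
      _ = (2 * L1 l + 2 * L2 * M + B2) * (J * |h|) := by ring
      _ ≤ B * (J * |h|) := by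
          refine mul_le_mul_of_nonneg_right ?_ (by positivity)
          have : 0 ≤ B1 l + B2 * M := by positivity
          linarith
      _ = _ := by ring
  have hsec : |a 1 + a (-1) - 2 * a 0| ≤ B * J * h ^ 2 := by
    have hψ : ∀ s ∈ Icc (0:ℝ) 1, HasDerivWithinAt (fun s => a s + a (-s))
        (h * a' s - h * a' (-s)) (Icc 0 1) s := by
      intro s hs
      obtain ⟨hs1, hs2⟩ := hneg s hs
      have h1 := (hda _ hs2).scomp s (hasDerivAt_neg s)
      have h2 := (hda s hs1).add h1
      refine HasDerivAt.hasDerivWithinAt ?_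
      convert h2 using 1
      · rfl
      · rw [smul_eq_mul]; ring
    have := (convex_Icc (0:ℝ) 1).norm_image_sub_le_of_norm_hasDerivWithin_le
      (f := fun s => a s + a (-s)) (C := B * J * h ^ 2) hψ (fun s hs => by
        rw [← mul_sub, norm_mul, Real.norm_eq_abs, Real.norm_eq_abs]
        calc |h| * |a' s - a' (-s)| ≤ |h| * (B * J * |h|) :=
              mul_le_mul_of_nonneg_left (ha2 s hs) (abs_nonneg h)
          _ = B * J * (|h| * |h|) := by ring
          _ = _ := by rw [← sq, sq_abs]) (left_mem_Icc.2 zero_le_one) (right_mem_Icc.2 zero_le_one)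
    simp only [neg_zero, sub_zero, norm_one, mul_one, Real.norm_eq_abs] at this
    rw [two_mul]; exact this
  have fin := alg_diff (n := n) (a0 := a 0) (ap := a 1) (am := a (-1)) (h := h) (J := J) (B := B)
    (M := M) (U0 := grad u (y 0)) (Up := grad u (y 1)) (Um := grad u (y (-1))) hh hJ1 hB0 hM
    (hH0 _ ⟨hyΩ 0 m0, mem_univ _⟩) (hab 1 m1) (hab _ mm) hsec (hg 0 m0) (hg 1 m1) (hg _ mm)
    (fun i => hd i 0 m0 1 m1) (fun i => hd i 0 m0 _ mm)
  simp only [ha, y0, y1, ym] at fin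
  exact fin

end SecondDiff


section Tools
variable {n : ℕ}

lemma exists_prim (q : ℝ) (hq : 1 < q) : ∃ G : ℝ → ℝ, ContDiff ℝ 1 G ∧
    (∀ t, HasDerivAt G ((max t 0) ^ (q - 1)) t) ∧ ∀ t, |G t| ≤ (max t 0) ^ q := by
  have hc : Continuous (fun t : ℝ => (max t 0) ^ (q - 1)) :=
    (continuous_id.max continuous_const).rpow_const fun _ => Or.inr (by linarith)
  have hd : ∀ t, HasDerivAt (fun t => ∫ s in (0:ℝ)..t, (max s 0) ^ (q - 1))
      ((max t 0) ^ (q - 1)) t := fun t => hc.integral_hasStrictDerivAt 0 t |>.hasDerivAt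
  refine ⟨fun t => ∫ s in (0:ℝ)..t, (max s 0) ^ (q - 1), ?_, hd, fun t => ?_⟩
  · rw [contDiff_one_iff_deriv]
    refine ⟨fun t => (hd t).differentiableAt, ?_⟩
    have : deriv (fun t => ∫ s in (0:ℝ)..t, (max s 0) ^ (q - 1)) = fun t => (max t 0) ^ (q - 1) :=
      funext fun t => (hd t).deriv
    rw [this]; exact hc
  · have := intervalIntegral.norm_integral_le_of_norm_le_const (a := 0) (b := t)
      (f := fun s : ℝ => (max s 0) ^ (q - 1)) (C := (max t 0) ^ (q - 1)) (fun s hs => by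
        rw [Real.norm_eq_abs, abs_of_nonneg (Real.rpow_nonneg (le_max_right _ _) _)]
        refine Real.rpow_le_rpow (le_max_right _ _) ?_ (by linarith)
        rcases le_total 0 t with h | h
        · rw [uIoc_of_le h] at hs
          exact max_le_max_right _ hs.2
        · rw [uIoc_of_ge h] at hs
          rw [max_eq_right hs.2]; exact le_max_right _ _)
    rw [Real.norm_eq_abs] at this
    refine this.trans ?_
    rcases le_total 0 t with h | h
    · rw [max_eq_left h, sub_zero, abs_of_nonneg h]
      rcases h.eq_or_lt with rfl | h'
      · simp; exact (Real.rpow_nonneg le_rfl _)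
      · rw [← Real.rpow_add_one h'.ne']; simp
    · rw [max_eq_right h, Real.zero_rpow (by linarith), zero_mul]
      exact Real.rpow_nonneg le_rfl _

lemma young2 {a b q : ℝ} (N : ℕ) (ha : 0 ≤ a) (hb : 1 ≤ b) (hq : 1 < q) :
    a ^ q * b ^ N ≤ a ^ (q + N) + b ^ (q + N) := by
  have hm : 0 < max a b := lt_of_lt_of_le (by linarith) (le_max_right a b)
  have h1 : a ^ q * b ^ N ≤ (max a b) ^ (q + N) := by
    rw [Real.rpow_add hm, Real.rpow_natCast]
    exact mul_le_mul (Real.rpow_le_rpow ha (le_max_left _ _) (by linarith))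
      (pow_le_pow_left₀ (by linarith) (le_max_right _ _) _) (by positivity) (by positivity)
  refine h1.trans ?_
  have p1 : 0 ≤ a ^ (q + N) := Real.rpow_nonneg ha _
  have p2 : 0 ≤ b ^ (q + N) := Real.rpow_nonneg (by linarith) _
  rcases max_choice a b with h | h <;> rw [h] <;> linarith

lemma young3 {a b c q : ℝ} (N : ℕ) (ha : 0 ≤ a) (hb : 1 ≤ b) (hc : 1 ≤ c) (hq : 1 < q) :
    a ^ (q - 1) * b ^ N * c ≤ a ^ (q + N) + b ^ (q + N) + c ^ (q + N) := by
  set m := max a (max b c) with hmd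
  have hbm : b ≤ m := (le_max_left b c).trans (le_max_right _ _)
  have hcm : c ≤ m := (le_max_right b c).trans (le_max_right _ _)
  have hm : 0 < m := lt_of_lt_of_le (by linarith) hbm
  have h1 : a ^ (q - 1) * b ^ N * c ≤ m ^ (q + N) := by
    have e : m ^ (q + N) = m ^ (q - 1) * m ^ N * m := by
      rw [← Real.rpow_natCast, ← Real.rpow_add hm, ← Real.rpow_add_one hm.ne']
      congr 1; ring
    rw [e]
    exact mul_le_mul (mul_le_mul (Real.rpow_le_rpow ha (le_max_left _ _) (by linarith))
      (pow_le_pow_left₀ (by linarith) hbm _) (by positivity) (by positivity)) hcm (by linarith)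
      (by positivity)
  refine h1.trans ?_
  have p1 : 0 ≤ a ^ (q + N) := Real.rpow_nonneg ha _
  have p2 : 0 ≤ b ^ (q + N) := Real.rpow_nonneg (by linarith) _
  have p3 : 0 ≤ c ^ (q + N) := Real.rpow_nonneg (by linarith) _
  rcases max_choice a (max b c) with h | h
  · rw [hmd, h]; linarith
  · rcases max_choice b c with h' | h' <;> rw [hmd, h, h'] <;> linarith

lemma shift_cont {G : (Fin n → ℝ) → ℝ} (hG : Continuous G) (h : ℝ) (e : Fin n → ℝ) :
    Continuous (fun x => ∫ s in (-1:ℝ)..1, G (x + (s * h) • e)) := by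
  apply intervalIntegral.continuous_parametric_intervalIntegral_of_continuous'
  fun_prop

lemma shift_int {G : (Fin n → ℝ) → ℝ} (hG : Continuous G) {x₀ : Fin n → ℝ} {r r' h : ℝ}
    (hG0 : ∀ x ∈ ball x₀ r', 0 ≤ G x) (hr : r + |h| ≤ r') {e : Fin n → ℝ} (he : ‖e‖ ≤ 1) :
    ∫ x in ball x₀ r, ∫ s in (-1:ℝ)..1, G (x + (s * h) • e) ≤ 2 * ∫ x in ball x₀ r', G x := by
  simp only [intervalIntegral.integral_of_le (show (-1:ℝ) ≤ 1 by norm_num)]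
  have hi : IntegrableOn G (ball x₀ r') := contOn_int hG.continuousOn
  rw [integral_integral_swap (f := fun x s => G (x + (s * h) • e))]
  · have hin : ∀ s ∈ Ioc (-1:ℝ) 1, 0 ≤ (∫ x in ball x₀ r, G (x + (s * h) • e)) ∧
        ∫ x in ball x₀ r, G (x + (s * h) • e) ≤ ∫ x in ball x₀ r', G x := by
      intro s hs
      set v := (s * h) • e with hv
      have hvn : ‖v‖ ≤ |h| := by
        rw [hv, norm_smul, Real.norm_eq_abs, abs_mul]
        have : |s| ≤ 1 := abs_le.2 ⟨hs.1.le, hs.2⟩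
        have h1 : |s| * |h| ≤ |h| := mul_le_of_le_one_left (abs_nonneg h) this
        exact (mul_le_of_le_one_right (by positivity) he).trans h1
      have hsub : ball (x₀ + v) r ⊆ ball x₀ r' := by
        refine ball_subset_ball' ?_
        rw [dist_eq_norm, add_sub_cancel_left]; linarith
      have e1 : ∫ x in ball x₀ r, G (x + v) = ∫ x in ball (x₀ + v) r, G x := by
        have := (measurePreserving_add_right (volume : Measure (Fin n → ℝ)) v).setIntegral_preimage_emb
          (measurableEmbedding_addRight v) G (ball (x₀ + v) r)
        rw [← this]
        congr 2
        ext y; simp [dist_eq_norm]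
      rw [e1]
      refine ⟨setIntegral_nonneg measurableSet_ball fun x hx => hG0 x (hsub hx), ?_⟩
      exact setIntegral_mono_set hi ((ae_restrict_iff' measurableSet_ball).2
        (Filter.Eventually.of_forall hG0)) (Filter.Eventually.of_forall hsub)
    have : ∫ s in Ioc (-1:ℝ) 1, (∫ x in ball x₀ r, G (x + (s * h) • e))
        ≤ ∫ s in Ioc (-1:ℝ) 1, (∫ x in ball x₀ r', G x) := by
      refine integral_mono_of_nonneg ?_ (integrable_const _) ?_
      · exact (ae_restrict_iff' measurableSet_Ioc).2
          (Filter.Eventually.of_forall fun s hs => (hin s hs).1)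
      · exact (ae_restrict_iff' measurableSet_Ioc).2
          (Filter.Eventually.of_forall fun s hs => (hin s hs).2)
    refine this.trans (le_of_eq ?_)
    simp; norm_num
  · rw [Measure.prod_restrict]
    have hc : ContinuousOn (Function.uncurry fun (x : Fin n → ℝ) (s : ℝ) => G (x + (s * h) • e))
        (closedBall x₀ r ×ˢ Icc (-1:ℝ) 1) := by
      apply Continuous.continuousOn
      simp only [Function.uncurry_def]
      fun_prop
    exact (hc.integrableOn_compact ((isCompact_closedBall _ _).prod isCompact_Icc)).mono_set
      (prod_mono ball_subset_closedBall Ioc_subset_Icc_self)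

end Tools

section Pointwise
variable {n : ℕ} {Ω : Set (Fin n → ℝ)} {H₁ : ((Fin n → ℝ) × ℝ) → ℝ}

lemma div_eq_X (hΩ : IsOpen Ω) (hH : ContDiffOn ℝ 1 H₁ (Ω ×ˢ (univ : Set ℝ)))
    {u : (Fin n → ℝ) → ℝ} (hu : ContDiffOn ℝ 3 u Ω) {x : Fin n → ℝ} (hx : x ∈ Ω)
    (κ : ℕ) (hκ : κ + 1 ≤ n) (j : Fin n) :
    ∑ i, pd i (fun y => newtonT (κ+1) (Aug u (phi H₁ u) y) i j) x
      = ((n:ℝ) - (κ+1)) * (Xld H₁ κ u j x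
        - 2 * H₁ (x, u x) * esymmMat (κ+1) (Aug u (phi H₁ u) x) * pd j u x) := by
  rw [div_newton hΩ hu (phi_contDiffOn hΩ hH hu) hx κ hκ j]
  set A := Aug u (phi H₁ u) x with hAdef
  have hs : Aᵀ = A := Aug_symm hΩ hu hx
  obtain ⟨hT, hcomm⟩ := newton_symm A hs κ
  obtain ⟨hT1, -⟩ := newton_symm A hs (κ+1)
  have sT : ∀ a b, newtonT κ A a b = newtonT κ A b a := fun a b => by
    conv_lhs => rw [← hT]
    rfl
  have sT1 : ∀ a b, newtonT (κ+1) A a b = newtonT (κ+1) A b a := fun a b => by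
    conv_lhs => rw [← hT1]
    rfl
  have sA : ∀ a b, A a b = A b a := fun a b => by
    conv_lhs => rw [← hs]
    rfl
  have hprod : ∀ l, ∑ i, newtonT κ A i j * A i l
      = esymmMat (κ+1) A * (if l = j then 1 else 0) - newtonT (κ+1) A j l := by
    intro l
    have e1 : ∑ i, newtonT κ A i j * A i l = (newtonT κ A * A) j l := by
      rw [Matrix.mul_apply]
      exact Finset.sum_congr rfl fun i _ => by rw [sT i j]
    rw [e1, newtonT]
    simp [Matrix.one_apply, eq_comm]
  have hsum : ∑ i, newtonT κ A i j * pd i (phi H₁ u) x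
      = 2 * H₁ (x, u x) * esymmMat (κ+1) A * pd j u x - Xld H₁ κ u j x := by
    simp only [fun i => pd_phi hΩ hH hu hx i, hess_eq_Aug u (phi H₁ u) x, ← hAdef]
    set a := H₁ (x, u x)
    set g := normSq (grad u x)
    set φ := phi H₁ u x with hφ
    set b0 := fderiv ℝ H₁ (x, u x) (0, 1)
    have e2 : ∑ i, newtonT κ A i j * ((fderiv ℝ H₁ (x, u x) (Pi.single i 1, 0) + b0 * pd i u x) * g
          + a * ∑ l, 2 * pd l u x * (A i l + φ * if i = l then 1 else 0))
        = ∑ i, fderiv ℝ H₁ (x, u x) (Pi.single i 1, 0) * (g * newtonT κ A j i)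
          + b0 * (g * ∑ i, newtonT κ A j i * pd i u x)
          + 2 * a * ∑ l, pd l u x * ∑ i, newtonT κ A i j * A i l
          + 2 * a * φ * ∑ i, newtonT κ A j i * pd i u x := by
      have e3 : ∑ l, pd l u x * ∑ i, newtonT κ A i j * A i l
          = ∑ i, newtonT κ A i j * ∑ l, pd l u x * A i l := by
        simp only [Finset.mul_sum]
        rw [Finset.sum_comm]
        exact Finset.sum_congr rfl fun i _ => Finset.sum_congr rfl fun l _ => by ring
      rw [e3]
      simp only [Finset.mul_sum (s := Finset.univ) (f := fun i => newtonT κ A j i * pd i u x),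
        Finset.mul_sum (s := Finset.univ) (f := fun i => newtonT κ A i j * ∑ l, pd l u x * A i l),
        Finset.mul_sum (s := Finset.univ) (f := fun i => _ * (newtonT κ A j i * pd i u x)),
        ← Finset.sum_add_distrib]
      refine Finset.sum_congr rfl fun i _ => ?_
      have e4 : ∑ l, 2 * pd l u x * (A i l + φ * if i = l then 1 else 0)
          = 2 * ∑ l, pd l u x * A i l + 2 * φ * pd i u x := by
        rw [Finset.mul_sum]
        simp only [mul_add, Finset.sum_add_distrib]
        congr 1
        · exact Finset.sum_congr rfl fun l _ => by ring
        · simp; ring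
      rw [e4, sT i j]; ring
    rw [e2]
    simp only [hprod]
    have e5 : ∑ l, pd l u x * (esymmMat (κ+1) A * (if l = j then 1 else 0) - newtonT (κ+1) A j l)
        = esymmMat (κ+1) A * pd j u x - ∑ l, newtonT (κ+1) A j l * pd l u x := by
      simp only [mul_sub, Finset.sum_sub_distrib]
      congr 1
      · simp [mul_comm]
      · exact Finset.sum_congr rfl fun l _ => by ring
    rw [e5]
    unfold Xld Fld Qld
    rw [← hAdef]
    show _ = 2 * a * esymmMat (κ+1) A * pd j u x -
      (2 * a * (∑ l, newtonT (κ + 1) A j l * pd l u x) -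
        2 * a * φ * (∑ l, newtonT κ A j l * pd l u x) -
        b0 * (g * ∑ l, newtonT κ A j l * pd l u x) -
        ∑ i, (fderiv ℝ H₁ (x, u x)) (Pi.single i 1, 0) * (g * newtonT κ A j i))
    ring
  rw [hsum]; ring

lemma trace_ddq {u : (Fin n → ℝ) → ℝ} (x : Fin n → ℝ) (κ : ℕ) (hκ : κ + 1 ≤ n)
    (A : Matrix (Fin n) (Fin n) ℝ) (l : Fin n) (h : ℝ) :
    ∑ i, ∑ j, newtonT (κ+1) A i j *
      ddq l h (fun y => ((phi H₁ u y) • (1 : Matrix (Fin n) (Fin n) ℝ)) i j) x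
      = ((n:ℝ) - (κ+1)) * esymmMat (κ+1) A * ddq l h (phi H₁ u) x := by
  have e : ∀ i j : Fin n, ddq l h (fun y => ((phi H₁ u y) • (1 : Matrix (Fin n) (Fin n) ℝ)) i j) x
      = (if i = j then 1 else 0) * ddq l h (phi H₁ u) x := by
    intro i j
    simp only [ddq, Matrix.smul_apply, smul_eq_mul, Matrix.one_apply]
    ring
  simp only [e]
  have := trace_newton A (κ+1) hκ
  push_cast at this
  rw [← this, Finset.sum_mul]
  refine Finset.sum_congr rfl fun i _ => ?_
  simp

end Pointwise


section Assembly
variable {n : ℕ} {Ω : Set (Fin n → ℝ)} {f : ((Fin n → ℝ) × ℝ × (Fin n → ℝ)) → ℝ}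
    {H₁ : ((Fin n → ℝ) × ℝ) → ℝ} {x₀ : Fin n → ℝ} {R M : ℝ}

lemma shift_mem {x : Fin n → ℝ} {r h s : ℝ} (l : Fin n) (hx : x ∈ ball x₀ r) (hs : |s| ≤ 1)
    {r' : ℝ} (hr : r + |h| ≤ r') : x + (s * h) • (Pi.single l 1 : Fin n → ℝ) ∈ ball x₀ r' := by
  rw [mem_ball, dist_eq_norm] at *
  have e : x + (s * h) • (Pi.single l 1 : Fin n → ℝ) - x₀
      = (x - x₀) + (s * h) • (Pi.single l 1 : Fin n → ℝ) := by abel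
  rw [e]
  refine (norm_add_le _ _).trans_lt ?_
  rw [norm_smul, Pi.norm_single, norm_one, mul_one, Real.norm_eq_abs, abs_mul]
  have : |s| * |h| ≤ |h| := mul_le_of_le_one_left (abs_nonneg h) hs
  linarith

lemma shift_p {x : Fin n → ℝ} {r h : ℝ} (l : Fin n) (hx : x ∈ ball x₀ (r - |h|)) :
    x + h • (Pi.single l 1 : Fin n → ℝ) ∈ ball x₀ r := by
  have := shift_mem (h := h) (s := 1) l hx (by simp) (r' := r) (by linarith)
  simpa using this

lemma shift_m {x : Fin n → ℝ} {r h : ℝ} (l : Fin n) (hx : x ∈ ball x₀ (r - |h|)) :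
    x - h • (Pi.single l 1 : Fin n → ℝ) ∈ ball x₀ r := by
  have := shift_mem (h := h) (s := -1) l hx (by simp) (r' := r) (by linarith)
  simpa [sub_eq_add_neg] using this

lemma ddq_contDiffOn {w : (Fin n → ℝ) → ℝ} {m : WithTop ℕ∞} {r h : ℝ}
    (hw : ContDiffOn ℝ m w (ball x₀ r)) (l : Fin n) :
    ContDiffOn ℝ m (ddq l h w) (ball x₀ (r - |h|)) := by
  have e : ddq l h w = fun y => (w (y + h • (Pi.single l 1 : Fin n → ℝ)) - 2 * w y
      + w (y - h • (Pi.single l 1 : Fin n → ℝ))) / h ^ 2 := rfl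
  rw [e]
  refine ContDiffOn.div_const (((ContDiffOn.comp hw (contDiffOn_id.add contDiffOn_const)
    (fun y hy => shift_p l hy)).sub (contDiffOn_const.mul (hw.mono
    (ball_subset_ball (by linarith [abs_nonneg h]))))).add
    (ContDiffOn.comp hw (contDiffOn_id.sub contDiffOn_const) (fun y hy => shift_m l hy))) _

lemma pd_ddq {w : (Fin n → ℝ) → ℝ} {r h : ℝ} (hw : ContDiffOn ℝ 1 w (ball x₀ r)) (l j : Fin n)
    {x : Fin n → ℝ} (hx : x ∈ ball x₀ (r - |h|)) :
    pd j (ddq l h w) x = ddq l h (pd j w) x := by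
  have tr : ∀ v : Fin n → ℝ, pd j (fun y => w (y + v)) x = pd j w (x + v) := by
    intro v; unfold pd; rw [fderiv_comp_add_right]
  have d : ∀ y ∈ ball x₀ r, DifferentiableAt ℝ w y := fun y hy => dAt isOpen_ball hw le_rfl hy
  set v : Fin n → ℝ := h • (Pi.single l 1 : Fin n → ℝ) with hv
  have dp : DifferentiableAt ℝ (fun y => w (y + v)) x :=
    DifferentiableAt.comp x (d _ (shift_p l hx)) (by fun_prop)
  have dm : DifferentiableAt ℝ (fun y => w (y + -v)) x :=
    DifferentiableAt.comp x (by rw [← sub_eq_add_neg]; exact d _ (shift_m l hx)) (by fun_prop)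
  have d0 : DifferentiableAt ℝ w x := d x (ball_subset_ball (by linarith [abs_nonneg h]) hx)
  have e : ddq l h w = fun y => (h ^ 2)⁻¹ * (w (y + v) - 2 * w y + w (y + -v)) := by
    funext y; simp only [ddq, ← hv, sub_eq_add_neg]; ring
  rw [e, pd_const_mul ((dp.fun_sub (d0.const_mul 2)).fun_add dm),
    pd_add (dp.fun_sub (d0.const_mul 2)) dm, pd_sub dp (d0.const_mul 2), pd_const_mul d0, tr, tr]
  simp only [ddq, ← hv, sub_eq_add_neg]; ring

lemma main_est (hΩ : IsOpen Ω) (hball : closedBall x₀ (2 * R) ⊆ Ω) (hR : 0 < R)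
    {c₀ : ℝ} (hc₀ : 0 < c₀) (hM : 0 ≤ M)
    (hf : ContinuousOn f (Ω ×ˢ ((univ : Set ℝ) ×ˢ (univ : Set (Fin n → ℝ)))))
    (hH : C11On H₁ (Ω ×ˢ (univ : Set ℝ))) (hH0 : ∀ y ∈ Ω ×ˢ (univ : Set ℝ), 0 ≤ H₁ y)
    (κ : ℕ) (hκ : κ + 2 ≤ n) :
    ∃ C : ℝ, ∀ (u : (Fin n → ℝ) → ℝ) (C₁ q ρ h : ℝ) (η : (Fin n → ℝ) → ℝ),
      Adm (κ+2) Ω f H₁ x₀ R M u C₁ →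
      1 < q → 0 < ρ → ρ ≤ R / 3 → h ≠ 0 → |h| < ρ → ContDiff ℝ 1 η →
      (∀ x, x ∉ ball x₀ (R + 2 * ρ) → η x = 0) →
      (∀ x, 0 ≤ η x ∧ η x ≤ 1) → (∀ x, vnorm (grad η x) ≤ c₀ / ρ) →
      (∫ x in ball x₀ (R + 2 * ρ),
          η x * (max ((∑ l : Fin n, ddq l h u x) + C₁) 0) ^ (q - 1) *
            ∑ j, (∑ i, pd i (fun y => newtonT (κ+1) (Aug u (phi H₁ u) y) i j) x) *
              pd j (fun y => (∑ l : Fin n, ddq l h u y) + C₁) x)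
        + ∑ l : Fin n, ∫ x in ball x₀ (R + 2 * ρ),
            η x * (max ((∑ l' : Fin n, ddq l' h u x) + C₁) 0) ^ (q - 1) *
              ∑ i, ∑ j, newtonT (κ+1) (Aug u (phi H₁ u) x) i j *
                ddq l h (fun y => ((phi H₁ u y) • (1 : Matrix (Fin n) (Fin n) ℝ)) i j) x
      ≥ -(C / ρ) *
          ((∫ x in ball x₀ (R + 2 * ρ),
              (max ((∑ l : Fin n, ddq l h u x) + C₁) 0) ^ (q + ((κ+1 : ℕ) : ℝ)))
            + ∫ x in ball x₀ (R + 3 * ρ), (lapl u x + C₁) ^ (q + ((κ+1 : ℕ) : ℝ))) := by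
  obtain ⟨CX, hCX, EX⟩ := est_X hΩ hball hR hc₀ hM hf hH κ hκ
  obtain ⟨CD, hCD, ED⟩ := ddq_bound (k := κ+2) (f := f) hΩ hball hR hM hH hH0
  obtain ⟨CS, hCS, ES⟩ := dom_esymm (k := κ+2) (f := f) (M := M) hΩ hball hH.1 (κ+1) (by omega)
  set c : ℝ := (n:ℝ) - (κ+1) with hc
  have hc0 : 0 ≤ c := by
    have : ((κ + 2 : ℕ) : ℝ) ≤ n := by exact_mod_cast hκ
    push_cast at this
    rw [hc]; linarith
  refine ⟨c * CX + c * CS * CD * (6 * n) * (R / 3), ?_⟩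
  intro u C₁ q ρ h η hA hq hρ hρR hh hhρ hη hη0 hη1 hη2
  set B := ball x₀ (R + 2 * ρ) with hB
  set O := ball x₀ (2 * R - |h|) with hO
  set p : ℝ := q + ((κ + 1 : ℕ) : ℝ) with hp
  have hp0 : 0 ≤ p := by positivity
  have hOr : closedBall x₀ (R + 2 * ρ) ⊆ O := closedBall_subset_ball (by linarith)
  have hBO : B ⊆ O := ball_subset_closedBall.trans hOr
  have hO2 : O ⊆ ball x₀ (2 * R) := ball_subset_ball (by linarith [abs_nonneg h])
  have h2Ω : ball x₀ (2 * R) ⊆ Ω := ball_subset_closedBall.trans hball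
  have hO3 : O ⊆ Ω := hO2.trans h2Ω
  have hcb : closedBall x₀ (R + 2 * ρ) ⊆ Ω := hOr.trans hO3
  have hB3 : B ⊆ ball x₀ (R + 3 * ρ) := ball_subset_ball (by linarith)
  have h3 : ball x₀ (R + 3 * ρ) ⊆ ball x₀ (2 * R) := ball_subset_ball (by linarith)
  set vt : (Fin n → ℝ) → ℝ := fun y => (∑ l : Fin n, ddq l h u y) + C₁ with hvt
  set a : (Fin n → ℝ) → ℝ := fun x => max (vt x) 0 with ha
  set w : (Fin n → ℝ) → ℝ := fun x => lapl u x + C₁ with hw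
  have hu2 := hA.hu.mono h2Ω
  have ddqu : ∀ l, ContDiffOn ℝ 3 (ddq l h u) O := fun l => ddq_contDiffOn hu2 l
  have hvtC : ContDiffOn ℝ 1 vt O :=
    ((ContDiffOn.sum fun l _ => ddqu l).add contDiffOn_const).of_le (by norm_num)
  have hpdvt : ∀ x ∈ O, ∀ j, pd j vt x = ∑ l, ddq l h (pd j u) x := by
    intro x hx j
    have dd : ∀ l, DifferentiableAt ℝ (ddq l h u) x := fun l =>
      dAt isOpen_ball (ddqu l) (by norm_num) hx
    rw [hvt, pd_add (DifferentiableAt.fun_sum fun l _ => dd l) (differentiableAt_const _), pd_const,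
      add_zero, pd_sum (fun l _ => dd l)]
    exact Finset.sum_congr rfl fun l _ => pd_ddq (hu2.of_le (by norm_num)) l j hx
  -- the primitive
  obtain ⟨G, hGC, hGd, hGb⟩ := exists_prim q hq
  set V : (Fin n → ℝ) → ℝ := fun x => G (vt x) with hV
  have hVC : ContDiffOn ℝ 1 V O := hGC.comp_contDiffOn hvtC
  have hpdV : ∀ x ∈ O, ∀ j, pd j V x = a x ^ (q - 1) * pd j vt x := by
    intro x hx j
    have hd := (hGd (vt x)).comp_hasFDerivAt x (dAt isOpen_ball hvtC le_rfl hx).hasFDerivAt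
    unfold pd
    have e : V = G ∘ vt := rfl
    rw [e, hd.fderiv]
    simp [ha]
  have EX := EX u C₁ hA ρ hρ hρR η hη hη0 hη1 hη2 O V isOpen_ball hOr hO2 hVC
  -- extension of the weight
  have hwΩ : ContinuousOn w Ω := (lapl_contOn hΩ hA.hu).add continuousOn_const
  have hw1 : ∀ x ∈ ball x₀ (2 * R), 1 ≤ w x := fun x hx => (hA.h1 x hx).1
  obtain ⟨W, hWr⟩ := ContinuousMap.exists_restrict_eq (isClosed_closedBall (x := x₀) (ε := 2 * R))
    ⟨(closedBall x₀ (2 * R)).restrict w, (hwΩ.mono hball).restrict⟩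
  have hWw : ∀ y ∈ ball x₀ (2 * R), W y = w y := by
    intro y hy
    have := congrArg (fun g => g ⟨y, ball_subset_closedBall hy⟩) hWr
    exact this
  have hWc : Continuous W := W.continuous
  have hWpc : Continuous (fun y => W y ^ p) := hWc.rpow_const fun _ => Or.inr hp0
  set J : Fin n → (Fin n → ℝ) → ℝ := fun l x =>
    ∫ s in (-1:ℝ)..1, W (x + (s * h) • (Pi.single l 1 : Fin n → ℝ)) with hJ
  set K : Fin n → (Fin n → ℝ) → ℝ := fun l x =>
    ∫ s in (-1:ℝ)..1, W (x + (s * h) • (Pi.single l 1 : Fin n → ℝ)) ^ p with hK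
  have hseg : ∀ x ∈ B, ∀ l : Fin n, ∀ s ∈ Icc (-1:ℝ) 1,
      x + (s * h) • (Pi.single l 1 : Fin n → ℝ) ∈ ball x₀ (2 * R) := fun x hx l s hs =>
    h3 (shift_mem l hx (abs_le.2 hs) (by linarith))
  have ha0 : ∀ x, 0 ≤ a x := fun x => le_max_right _ _
  -- continuity
  have hvtc : ContinuousOn vt (closedBall x₀ (R + 2 * ρ)) := hvtC.continuousOn.mono hOr
  have hac : ContinuousOn a (closedBall x₀ (R + 2 * ρ)) := hvtc.sup continuousOn_const
  have haq : ContinuousOn (fun x => a x ^ (q - 1)) (closedBall x₀ (R + 2 * ρ)) :=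
    hac.rpow_const fun _ _ => Or.inr (by linarith)
  have hap : ContinuousOn (fun x => a x ^ p) (closedBall x₀ (R + 2 * ρ)) :=
    hac.rpow_const fun _ _ => Or.inr hp0
  have hηc : ContinuousOn η (closedBall x₀ (R + 2 * ρ)) := hη.continuous.continuousOn
  have hwc : ContinuousOn w (closedBall x₀ (R + 2 * ρ)) := hwΩ.mono hcb
  have hwp : ContinuousOn (fun x => w x ^ p) (closedBall x₀ (R + 2 * ρ)) :=
    hwc.rpow_const fun _ _ => Or.inr hp0
  have hφC := phi_contDiffOn hΩ hH.1 hA.hu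
  have hTC := fun i j => newtonAug_contDiffOn hΩ hA.hu hφC (κ+1) i j
  have hpdvtc : ∀ j, ContinuousOn (pd j vt) (closedBall x₀ (R + 2 * ρ)) := fun j =>
    (pd_contDiffOn isOpen_ball hvtC (a := 0) (by norm_num) j).continuousOn.mono hOr
  have I1 : IntegrableOn (fun x => η x * a x ^ (q - 1) *
      ∑ j, (∑ i, pd i (fun y => newtonT (κ+1) (Aug u (phi H₁ u) y) i j) x) * pd j vt x) B := by
    refine contOn_int ((hηc.fun_mul haq).fun_mul (continuousOn_finsetSum _ fun j _ =>
      (continuousOn_finsetSum _ fun i _ => ?_).fun_mul (hpdvtc j)))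
    exact (pd_contDiffOn hΩ (hTC i j) (a := 0) (by norm_num) i).continuousOn.mono hcb
  have hσc : ContinuousOn (fun x => esymmMat (κ+1) (Aug u (phi H₁ u) x))
      (closedBall x₀ (R + 2 * ρ)) :=
    (esymm_contDiffOn (κ+1) _ (Aug_contDiffOn hΩ hA.hu hφC)).continuousOn.mono hcb
  have e2 : ∀ l x, ∑ i, ∑ j, newtonT (κ+1) (Aug u (phi H₁ u) x) i j *
      ddq l h (fun y => ((phi H₁ u y) • (1 : Matrix (Fin n) (Fin n) ℝ)) i j) x
      = c * esymmMat (κ+1) (Aug u (phi H₁ u) x) * ddq l h (phi H₁ u) x := fun l x =>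
    trace_ddq x κ (by omega) _ l h
  simp only [e2]
  have I2 : ∀ l, IntegrableOn (fun x => η x * a x ^ (q - 1) *
      (c * esymmMat (κ+1) (Aug u (phi H₁ u) x) * ddq l h (phi H₁ u) x)) B := by
    intro l
    refine contOn_int ((hηc.fun_mul haq).fun_mul ((continuousOn_const.fun_mul hσc).fun_mul ?_))
    exact (ddq_contDiffOn (hφC.mono h2Ω) l).continuousOn.mono hOr
  have hXC : ∀ j, ContinuousOn (Xld H₁ κ u j) (closedBall x₀ (R + 2 * ρ)) := by
    intro j
    have hsc : ContinuousOn (fun x => ((n:ℝ) - (κ+1))⁻¹ *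
      (∑ i, pd i (fun y => newtonT (κ+1) (Aug u (phi H₁ u) y) i j) x)
        + 2 * H₁ (x, u x) * esymmMat (κ+1) (Aug u (phi H₁ u) x) * pd j u x)
        (closedBall x₀ (R + 2 * ρ)) := by
      refine (continuousOn_const.fun_mul (continuousOn_finsetSum _ fun i _ => ?_)).fun_add
        (((continuousOn_const.fun_mul ((a_contDiffOn hH.1 hA.hu).continuousOn.mono hcb)).fun_mul
          hσc).fun_mul ((pd_contDiffOn hΩ hA.hu (a := 2) (by norm_num) j).continuousOn.mono hcb))
      exact (pd_contDiffOn hΩ (hTC i j) (a := 0) (by norm_num) i).continuousOn.mono hcb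
    refine hsc.congr fun x hx => ?_
    have hcpos : ((n:ℝ) - (κ+1)) ≠ 0 := by
      have : ((κ + 2 : ℕ) : ℝ) ≤ n := by exact_mod_cast hκ
      push_cast at this
      intro h0; linarith
    simp only [div_eq_X hΩ hH.1 hA.hu (hcb hx) κ (by omega) j]
    field_simp
    ring
  have IP : IntegrableOn (fun x => η x * ∑ j, Xld H₁ κ u j x * pd j V x) B :=
    contOn_int (hηc.fun_mul (continuousOn_finsetSum _ fun j _ => (hXC j).fun_mul
      ((pd_contDiffOn isOpen_ball hVC (a := 0) (by norm_num) j).continuousOn.mono hOr)))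
  have Iap : IntegrableOn (fun x => a x ^ p) B := contOn_int hap
  have Iwp : IntegrableOn (fun x => w x ^ p) B := contOn_int hwp
  have IK : ∀ l, IntegrableOn (K l) B := fun l =>
    contOn_int (shift_cont hWpc h _).continuousOn
  have IQ : IntegrableOn (fun x => ∑ l, (2 * a x ^ p + 2 * w x ^ p + K l x)) B :=
    integrable_finsetSum _ fun l _ => ((Iap.const_mul 2).add (Iwp.const_mul 2)).add (IK l)
  -- pointwise inequality
  have hpt : ∀ x ∈ B, c * (η x * ∑ j, Xld H₁ κ u j x * pd j V x)
      - c * CS * CD * ∑ l, (2 * a x ^ p + 2 * w x ^ p + K l x)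
      ≤ η x * a x ^ (q - 1) *
        (∑ j, (∑ i, pd i (fun y => newtonT (κ+1) (Aug u (phi H₁ u) y) i j) x) * pd j vt x)
        + ∑ l, η x * a x ^ (q - 1) *
          (c * esymmMat (κ+1) (Aug u (phi H₁ u) x) * ddq l h (phi H₁ u) x) := by
    intro x hx
    have hxO := hBO hx
    have hx2 := hO2 hxO
    have hxΩ := hO3 hxO
    have hηB := hη1 x
    have hw1x := hw1 x hx2
    have hσ0 : 0 < esymmMat (κ+1) (Aug u (phi H₁ u) x) :=
      (hA.heq x hxΩ).2 (κ+1) (by omega) (by omega)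
    have hσ1 : |esymmMat (κ+1) (Aug u (phi H₁ u) x)| ≤ CS * w x ^ (κ+1) :=
      ES ⟨u, C₁, x, hA, hx2⟩
    rw [abs_of_pos hσ0] at hσ1
    set σ := esymmMat (κ+1) (Aug u (phi H₁ u) x) with hσ
    have hq0 : 0 ≤ a x ^ (q - 1) := Real.rpow_nonneg (ha0 x) _
    have hJK : ∀ l, a x ^ (q - 1) * w x ^ (κ+1) * J l x ≤ 2 * a x ^ p + 2 * w x ^ p + K l x := by
      intro l
      have hc1 : Continuous fun s : ℝ => W (x + (s * h) • (Pi.single l 1 : Fin n → ℝ)) := by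
        fun_prop
      have hc2 : Continuous fun s : ℝ => W (x + (s * h) • (Pi.single l 1 : Fin n → ℝ)) ^ p :=
        hc1.rpow_const fun _ => Or.inr hp0
      have : ∫ s in (-1:ℝ)..1, a x ^ (q - 1) * w x ^ (κ+1) *
          W (x + (s * h) • (Pi.single l 1 : Fin n → ℝ))
          ≤ ∫ s in (-1:ℝ)..1, ((a x ^ p + w x ^ p)
            + W (x + (s * h) • (Pi.single l 1 : Fin n → ℝ)) ^ p) := by
        refine intervalIntegral.integral_mono_on (by norm_num)
          ((continuous_const.mul hc1).intervalIntegrable _ _)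
          ((continuous_const.add hc2).intervalIntegrable _ _) fun s hs => ?_
        refine young3 (κ+1) (ha0 x) hw1x ?_ hq
        rw [hWw _ (hseg x hx l s hs)]; exact hw1 _ (hseg x hx l s hs)
      rw [intervalIntegral.integral_const_mul, intervalIntegral.integral_add
        (by simp) (hc2.intervalIntegrable _ _)] at this
      refine this.trans (le_of_eq ?_)
      simp only [intervalIntegral.integral_const, smul_eq_mul, hK]
      ring
    have hD : ∀ l, -(CD * J l x) ≤ ddq l h (phi H₁ u) x
        - 2 * H₁ (x, u x) * ∑ i, pd i u x * ddq l h (pd i u) x := fun l =>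
      ED u C₁ hA W hWc hWw l h x hh (hseg x hx l)
    have hJ0 : ∀ l, 0 ≤ J l x := fun l => by
      refine intervalIntegral.integral_nonneg (by norm_num) fun s hs => ?_
      rw [hWw _ (hseg x hx l s hs)]; linarith [hw1 _ (hseg x hx l s hs)]
    have eR : η x * a x ^ (q - 1) *
        (∑ j, (∑ i, pd i (fun y => newtonT (κ+1) (Aug u (phi H₁ u) y) i j) x) * pd j vt x)
        + ∑ l, η x * a x ^ (q - 1) * (c * σ * ddq l h (phi H₁ u) x)
        = c * (η x * ∑ j, Xld H₁ κ u j x * pd j V x)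
          + ∑ l, c * (η x * a x ^ (q - 1)) * σ * (ddq l h (phi H₁ u) x
        - 2 * H₁ (x, u x) * ∑ i, pd i u x * ddq l h (pd i u) x) := by
      simp only [fun j => div_eq_X hΩ hH.1 hA.hu hxΩ κ (by omega) j, hpdV x hxO]
      rw [← hc, ← hσ]
      have s1 : ∑ j, c * (Xld H₁ κ u j x - 2 * H₁ (x, u x) * σ * pd j u x) * pd j vt x
          = c * ∑ j, Xld H₁ κ u j x * pd j vt x
            - c * (2 * H₁ (x, u x) * σ) * ∑ j, pd j u x * pd j vt x := by
        rw [Finset.mul_sum, Finset.mul_sum, ← Finset.sum_sub_distrib]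
        exact Finset.sum_congr rfl fun j _ => by ring
      have s2 : ∑ j, Xld H₁ κ u j x * (a x ^ (q - 1) * pd j vt x)
          = a x ^ (q - 1) * ∑ j, Xld H₁ κ u j x * pd j vt x := by
        rw [Finset.mul_sum]
        exact Finset.sum_congr rfl fun j _ => by ring
      have s3 : ∑ j, pd j u x * pd j vt x = ∑ l, ∑ i, pd i u x * ddq l h (pd i u) x := by
        simp only [hpdvt x hxO, Finset.mul_sum]
        rw [Finset.sum_comm]
      have s4 : ∑ l, c * (η x * a x ^ (q - 1)) * σ * (ddq l h (phi H₁ u) x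
        - 2 * H₁ (x, u x) * ∑ i, pd i u x * ddq l h (pd i u) x)
        = c * (η x * a x ^ (q - 1)) * σ * ((∑ l, ddq l h (phi H₁ u) x)
          - 2 * H₁ (x, u x) * ∑ l, ∑ i, pd i u x * ddq l h (pd i u) x) := by
        rw [← Finset.mul_sum, Finset.sum_sub_distrib, ← Finset.mul_sum]
      have s5 : ∑ l, η x * a x ^ (q - 1) * (c * σ * ddq l h (phi H₁ u) x)
          = η x * a x ^ (q - 1) * (c * σ) * ∑ l, ddq l h (phi H₁ u) x := by
        rw [Finset.mul_sum]
        exact Finset.sum_congr rfl fun j _ => by ring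
      rw [s1, s2, s3, s4, s5]
      ring
    rw [eR, sub_eq_add_neg]
    refine add_le_add le_rfl ?_
    rw [Finset.mul_sum, ← Finset.sum_neg_distrib]
    refine Finset.sum_le_sum fun l _ => ?_
    have hnn : 0 ≤ c * (η x * a x ^ (q - 1)) * σ := by
      have := hηB.1; positivity
    refine le_trans ?_ (mul_le_mul_of_nonneg_left (hD l) hnn)
    rw [mul_neg, neg_le_neg_iff]
    have t1 : η x * a x ^ (q - 1) ≤ a x ^ (q - 1) := mul_le_of_le_one_left hq0 hηB.2
    have hJl := hJ0 l
    have hηA := hηB.1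
    calc c * (η x * a x ^ (q - 1)) * σ * (CD * J l x)
        ≤ c * (a x ^ (q - 1)) * (CS * w x ^ (κ+1)) * (CD * J l x) := by gcongr
      _ = c * CS * CD * (a x ^ (q - 1) * w x ^ (κ+1) * J l x) := by ring
      _ ≤ _ := mul_le_mul_of_nonneg_left (hJK l) (by positivity)
  -- integrate
  have IL : IntegrableOn (fun x => c * (η x * ∑ j, Xld H₁ κ u j x * pd j V x)
      - c * CS * CD * ∑ l, (2 * a x ^ p + 2 * w x ^ p + K l x)) B :=
    (IP.const_mul c).sub (IQ.const_mul _)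
  have I2s := integrable_finsetSum Finset.univ fun l _ => I2 l
  have hIneq := setIntegral_mono_on IL (I1.add I2s) measurableSet_ball
    (fun x hx => by simpa using hpt x hx)
  have eL : ∫ x in B, (c * (η x * ∑ j, Xld H₁ κ u j x * pd j V x)
      - c * CS * CD * ∑ l, (2 * a x ^ p + 2 * w x ^ p + K l x))
      = c * (∫ x in B, η x * ∑ j, Xld H₁ κ u j x * pd j V x)
        - c * CS * CD * ∫ x in B, ∑ l, (2 * a x ^ p + 2 * w x ^ p + K l x) := by
    rw [integral_sub (IP.const_mul c) (IQ.const_mul _), integral_const_mul, integral_const_mul]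
  have eRR := integral_add I1 I2s
  rw [integral_finsetSum _ fun l _ => I2 l] at eRR
  set A1 := ∫ x in B, a x ^ p with hA1
  set W1 := ∫ x in ball x₀ (R + 3 * ρ), w x ^ p with hW1
  have hI3 : IntegrableOn (fun x => W x ^ p) (ball x₀ (R + 3 * ρ)) := contOn_int hWpc.continuousOn
  have hWI : ∫ x in ball x₀ (R + 3 * ρ), W x ^ p = W1 :=
    setIntegral_congr_fun measurableSet_ball fun x hx => by
      show W x ^ p = w x ^ p
      rw [hWw x (h3 hx)]
  have hI3w : IntegrableOn (fun x => w x ^ p) (ball x₀ (R + 3 * ρ)) :=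
    hI3.congr_fun (fun x hx => by
      show W x ^ p = w x ^ p
      rw [hWw x (h3 hx)]) measurableSet_ball
  have hwpos : ∀ x ∈ ball x₀ (R + 3 * ρ), 0 ≤ w x ^ p := fun x hx =>
    Real.rpow_nonneg (by linarith [hw1 x (h3 hx)]) _
  have hA10 : 0 ≤ A1 := setIntegral_nonneg measurableSet_ball fun x _ => Real.rpow_nonneg (ha0 x) _
  have hW10 : 0 ≤ W1 := setIntegral_nonneg measurableSet_ball hwpos
  have hwB : ∫ x in B, w x ^ p ≤ W1 :=
    setIntegral_mono_set hI3w ((ae_restrict_iff' measurableSet_ball).2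
      (Filter.Eventually.of_forall hwpos)) (Filter.Eventually.of_forall hB3)
  have hKI : ∀ l, ∫ x in B, K l x ≤ 2 * W1 := by
    intro l
    rw [← hWI]
    refine shift_int hWpc (fun x hx => ?_) (by linarith) (by simp [Pi.norm_single])
    rw [hWw x (h3 hx)]; exact hwpos x hx
  have hQ : ∫ x in B, ∑ l, (2 * a x ^ p + 2 * w x ^ p + K l x) ≤ (6 * n) * (A1 + W1) := by
    have i1 : Integrable (fun x => 2 * a x ^ p) (volume.restrict B) := Iap.const_mul 2
    have i2 : Integrable (fun x => 2 * w x ^ p) (volume.restrict B) := Iwp.const_mul 2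
    have i3 : Integrable (fun x => 2 * a x ^ p + 2 * w x ^ p) (volume.restrict B) := i1.add i2
    have i4 : ∀ l ∈ (Finset.univ : Finset (Fin n)), Integrable
        (fun x => 2 * a x ^ p + 2 * w x ^ p + K l x) (volume.restrict B) :=
      fun l _ => i3.add (IK l)
    rw [integral_finsetSum _ i4]
    calc _ ≤ ∑ _l : Fin n, 6 * (A1 + W1) := by
          refine Finset.sum_le_sum fun l _ => ?_
          rw [integral_add i3 (IK l), integral_add i1 i2, integral_const_mul, integral_const_mul]
          linarith [hKI l]
      _ = _ := by simp; ring
  have hVb : ∫ x in B, |V x| * (lapl u x + C₁) ^ (κ+1) ≤ A1 + W1 := by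
    have : ∫ x in B, |V x| * (lapl u x + C₁) ^ (κ+1) ≤ ∫ x in B, (a x ^ p + w x ^ p) := by
      refine setIntegral_mono_on ?_ (Iap.add Iwp) measurableSet_ball fun x hx => ?_
      · exact contOn_int (((hVC.continuousOn.mono hOr).abs).fun_mul (hwc.pow _))
      · have hw1x := hw1 x (hO2 (hBO hx))
        refine le_trans (mul_le_mul_of_nonneg_right (hGb (vt x)) ?_) (young2 (κ+1) (ha0 x) hw1x hq)
        have : 0 ≤ w x := by linarith
        exact pow_nonneg this _
    rw [integral_add Iap Iwp] at this
    linarith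
  have hP : -(CX / ρ * (A1 + W1)) ≤ ∫ x in B, η x * ∑ j, Xld H₁ κ u j x * pd j V x := by
    have := (abs_le.1 EX).1
    have h2 := mul_le_mul_of_nonneg_left hVb (show 0 ≤ CX / ρ by positivity)
    linarith
  have hfin : -((c * CX + c * CS * CD * (6 * n) * (R / 3)) / ρ) * (A1 + W1)
      ≤ c * (∫ x in B, η x * ∑ j, Xld H₁ κ u j x * pd j V x)
        - c * CS * CD * ∫ x in B, ∑ l, (2 * a x ^ p + 2 * w x ^ p + K l x) := by
    have t1 := mul_le_mul_of_nonneg_left hP hc0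
    have t2 := mul_le_mul_of_nonneg_left hQ (show 0 ≤ c * CS * CD by positivity)
    have t3 : 1 ≤ (R / 3) / ρ := (one_le_div hρ).2 hρR
    have t4 : c * CS * CD * ((6 * n) * (A1 + W1)) * 1
        ≤ c * CS * CD * ((6 * n) * (A1 + W1)) * ((R / 3) / ρ) :=
      mul_le_mul_of_nonneg_left t3 (by positivity)
    have t5 : -((c * CX + c * CS * CD * (6 * n) * (R / 3)) / ρ) * (A1 + W1)
        = c * -(CX / ρ * (A1 + W1)) - c * CS * CD * ((6 * n) * (A1 + W1)) * ((R / 3) / ρ) := by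
      ring
    rw [t5]; linarith
  rw [ge_iff_le]
  refine hfin.trans ?_
  rw [← eL]
  refine hIneq.trans (le_of_eq ?_)
  exact eRR

end Assembly

/-- Cancellation of higher order terms, Case 1
(Corollary 4.7, estimate (AG), for classical solutions). -/
theorem cancellation_higher_order_case1
    {n : ℕ} (hn : 3 ≤ n) (k : ℕ) (hk2 : 2 ≤ k) (hkn : k ≤ n)
    (Ω : Set (Fin n → ℝ)) (hΩ : IsOpen Ω)
    (f : ((Fin n → ℝ) × ℝ × (Fin n → ℝ)) → ℝ)
    (hfpos : ∀ y ∈ Ω ×ˢ ((univ : Set ℝ) ×ˢ (univ : Set (Fin n → ℝ))), 0 < f y)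
    (hf : C11On f (Ω ×ˢ ((univ : Set ℝ) ×ˢ (univ : Set (Fin n → ℝ)))))
    (H₁ : ((Fin n → ℝ) × ℝ) → ℝ)
    (hH₁nonneg : ∀ y ∈ Ω ×ˢ (univ : Set ℝ), 0 ≤ H₁ y)
    (hH₁ : C11On H₁ (Ω ×ˢ (univ : Set ℝ)))
    (x₀ : Fin n → ℝ) (R : ℝ) (hR : 0 < R)
    (hball : closure (ball x₀ (2 * R)) ⊆ Ω)
    (M : ℝ) (hM : 0 < M) (c₀ : ℝ) (hc₀ : 0 < c₀) :
    ∃ C : ℝ, ∀ (u : (Fin n → ℝ) → ℝ) (C₁ q ρ h : ℝ) (η : (Fin n → ℝ) → ℝ),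
      ContDiffOn ℝ 3 u Ω →
      (∀ x ∈ Ω,
        esymmMat k (hess u x -
            (H₁ (x, u x) * normSq (grad u x)) • (1 : Matrix (Fin n) (Fin n) ℝ))
          = f (x, u x, grad u x) ^ k ∧
        GammaPlus k (hess u x -
            (H₁ (x, u x) * normSq (grad u x)) • (1 : Matrix (Fin n) (Fin n) ℝ))) →
      (∀ x ∈ ball x₀ (2 * R), |u x| + vnorm (grad u x) ≤ M) →
      0 ≤ C₁ → C₁ ≤ M →
      (∀ x ∈ ball x₀ (2 * R), 1 ≤ lapl u x + C₁ ∧ matNorm (hess u x) ≤ lapl u x + C₁) →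
      1 < q → 0 < ρ → ρ ≤ R / 3 → h ≠ 0 → |h| < ρ →
      ContDiff ℝ (⊤ : ℕ∞) η →
      (∀ x, x ∉ ball x₀ (R + 2 * ρ) → η x = 0) →
      (∀ x, 0 ≤ η x ∧ η x ≤ 1) →
      (∀ x ∈ ball x₀ (R + ρ), η x = 1) →
      (∀ x, vnorm (grad η x) ≤ c₀ / ρ) →
      (∀ x, matNorm (hess η x) ≤ c₀ / ρ ^ 2) →
      (∫ x in ball x₀ (R + 2 * ρ),
          η x * (max ((∑ l : Fin n, ddq l h u x) + C₁) 0) ^ (q - 1) *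
            ∑ j, (∑ i, pd i (fun y => newtonT (k - 1) (hess u y -
                  (H₁ (y, u y) * normSq (grad u y)) • (1 : Matrix (Fin n) (Fin n) ℝ)) i j) x) *
              pd j (fun y => (∑ l : Fin n, ddq l h u y) + C₁) x)
        + ∑ l : Fin n, ∫ x in ball x₀ (R + 2 * ρ),
            η x * (max ((∑ l' : Fin n, ddq l' h u x) + C₁) 0) ^ (q - 1) *
              ∑ i, ∑ j, newtonT (k - 1) (hess u x -
                  (H₁ (x, u x) * normSq (grad u x)) • (1 : Matrix (Fin n) (Fin n) ℝ)) i j *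
                ddq l h (fun y =>
                  ((H₁ (y, u y) * normSq (grad u y)) • (1 : Matrix (Fin n) (Fin n) ℝ)) i j) x
      ≥ -(C / ρ) *
          ((∫ x in ball x₀ (R + 2 * ρ),
              (max ((∑ l : Fin n, ddq l h u x) + C₁) 0) ^ (q + (k : ℝ) - 1))
            + ∫ x in ball x₀ (R + 3 * ρ), (lapl u x + C₁) ^ (q + (k : ℝ) - 1)) := by
  obtain ⟨κ, rfl⟩ : ∃ κ, k = κ + 2 := ⟨k - 2, by omega⟩
  have hball' : closedBall x₀ (2 * R) ⊆ Ω := by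
    rwa [closure_ball x₀ (by positivity : 2 * R ≠ 0)] at hball
  obtain ⟨C, hC⟩ := main_est hΩ hball' hR hc₀ hM.le hf.1.continuousOn hH₁ hH₁nonneg κ hkn
  refine ⟨C, ?_⟩
  intro u C₁ q ρ h η hu heq hM' hC0 hCM h1 hq hρ hρR hh hhρ hη hη0 hη1 _ hη2 _
  have hA : Adm (κ+2) Ω f H₁ x₀ R M u C₁ := ⟨hu, heq, hM', h1⟩
  have hfin := hC u C₁ q ρ h η hA hq hρ hρR hh hhρ (hη.of_le (by exact_mod_cast le_top)) hη0 hη1 hη2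
  have e : q + ((κ + 2 : ℕ) : ℝ) - 1 = q + ((κ + 1 : ℕ) : ℝ) := by push_cast; ring
  rw [e]
  exact hfin
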